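/- Every admissible map u with D(u) = 0 and ‖u‖ ≠ 0 satisfies E(u) ≥ 4π/(3H²). (Explicit positive lower bound for the depth d = inf{E(u) : D(u) = 0, ‖u‖ ≠ 0} of the potential well.) -/

import Mathlib

open MeasureTheory Real Filter

/-- x-partial derivative of a map `u : ℝ² → ℝ³`. -/
noncomputable def pderivX (u : ℝ × ℝ → Fin 3 → ℝ) (p : ℝ × ℝ) : Fin 3 → ℝ :=
  fderiv ℝ u p (1, 0)

/-- y-partial derivative of a map `u : ℝ² → ℝ³`. -/
noncomputable def pderivY (u : ℝ × ℝ → Fin 3 → ℝ) (p : ℝ × ℝ) : Fin 3 → ℝ :=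
  fderiv ℝ u p (0, 1)

/-- Euclidean dot product on `ℝ³`. -/
def dot3 (a b : Fin 3 → ℝ) : ℝ := ∑ i, a i * b i

/-- Squared Dirichlet norm `‖u‖² = ∫_Ω |∇u|²`. -/
noncomputable def dirEnergy (Ω : Set (ℝ × ℝ)) (u : ℝ × ℝ → Fin 3 → ℝ) : ℝ :=
  ∫ p in Ω, (dot3 (pderivX u p) (pderivX u p) + dot3 (pderivY u p) (pderivY u p))

/-- Dirichlet norm `‖u‖`. -/
noncomputable def dnorm (Ω : Set (ℝ × ℝ)) (u : ℝ × ℝ → Fin 3 → ℝ) : ℝ :=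
  Real.sqrt (dirEnergy Ω u)

/-- Volume functional `V(u) = ∫_Ω u · (u_x ∧ u_y)`. -/
noncomputable def vol (Ω : Set (ℝ × ℝ)) (u : ℝ × ℝ → Fin 3 → ℝ) : ℝ :=
  ∫ p in Ω, dot3 (u p) (crossProduct (pderivX u p) (pderivY u p))

/-- An admissible map: smooth with compact support contained in `Ω`. -/
def IsAdmissible (Ω : Set (ℝ × ℝ)) (u : ℝ × ℝ → Fin 3 → ℝ) : Prop :=
  ContDiff ℝ (⊤ : ℕ∞) u ∧ HasCompactSupport u ∧ tsupport u ⊆ Ω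

/-- Energy functional `E(u) = (1/2)‖u‖² + (2H/3)·V(u)`. -/
noncomputable def Efun (Ω : Set (ℝ × ℝ)) (H : ℝ) (u : ℝ × ℝ → Fin 3 → ℝ) : ℝ :=
  (1 / 2) * dirEnergy Ω u + (2 * H / 3) * vol Ω u

/-- Modified Nehari functional `D_δ(u) = δ‖u‖² + 2H·V(u)`; `D = D₁`. -/
noncomputable def Dfun (Ω : Set (ℝ × ℝ)) (H δ : ℝ) (u : ℝ × ℝ → Fin 3 → ℝ) : ℝ :=
  δ * dirEnergy Ω u + 2 * H * vol Ω u

/-- The radius `r(δ) = 2√(2π)·δ/H`. -/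
noncomputable def rPW (H δ : ℝ) : ℝ := 2 * Real.sqrt (2 * Real.pi) * δ / H

/-- The coefficient `a(δ) = 1/2 − δ/3`. -/
noncomputable def aPW (δ : ℝ) : ℝ := 1 / 2 - δ / 3

/-!
If `D(u) = 0` then `E(u) = ‖u‖² / 6` and `‖u‖⁴ = 4 H² V(u)²`, so it is enough to know the
isoperimetric inequality `32 π V(u)² ≤ ‖u‖⁶`. For this, the cone `(t, p) ↦ t u(p)`, `0 < t ≤ 1`,
covers the points of `ℝ³` with a degree `w` which is integer-valued and satisfies `∫ w = V(u) / 3`.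
By Stokes' theorem on the cone, the distributional derivatives of `w` are bounded by the area
measure of `u`, whose total mass is at most `‖u‖² / 2`. The isoperimetric inequality for functions
of bounded variation that satisfy `|w| ≥ 1` on their support, with its sharp constant, follows from
the Brunn–Minkowski inequality: mollify `w` to a `C¹` function `W`, and compare the superlevel sets
of `W` with those of `W + h sup_{b ∈ B} |∂_b W|`, which to first order in `h` contain their
Minkowski sums with `h B`.
-/

open scoped ENNReal NNReal Topology Pointwise Matrix

section PrekopaLeindler

theorem lintegral_eq_lintegral_meas_ofReal_lt {α : Type*} [MeasurableSpace α] (μ : Measure α)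
    [SFinite μ] {f : α → ℝ≥0∞} (hf : Measurable f) :
    ∫⁻ x, f x ∂μ = ∫⁻ t in Set.Ioi (0 : ℝ), μ {x | ENNReal.ofReal t < f x} := by
  have layers (c : ℝ≥0∞) :
      ∫⁻ t in Set.Ioi (0 : ℝ), {t | ENNReal.ofReal t < c}.indicator 1 t = c := by
    rw [lintegral_indicator_one (measurableSet_lt ENNReal.measurable_ofReal measurable_const),
      Measure.restrict_apply (measurableSet_lt ENNReal.measurable_ofReal measurable_const)]
    rcases eq_or_ne c ∞ with rfl | hc
    · simp
    · have : {t | ENNReal.ofReal t < c} ∩ Set.Ioi 0 = Set.Ioo 0 c.toReal := by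
        ext t
        simp only [Set.mem_inter_iff, Set.mem_ofPred_eq, Set.mem_Ioi, Set.mem_Ioo]
        exact ⟨fun h => ⟨h.2, (ENNReal.ofReal_lt_iff_lt_toReal h.2.le hc).1 h.1⟩,
          fun h => ⟨(ENNReal.ofReal_lt_iff_lt_toReal h.1.le hc).2 h.2, h.1⟩⟩
      rw [this, Real.volume_Ioo, sub_zero, ENNReal.ofReal_toReal hc]
  have hm : MeasurableSet {p : α × ℝ | ENNReal.ofReal p.2 < f p.1} :=
    measurableSet_lt (ENNReal.measurable_ofReal.comp measurable_snd) (hf.comp measurable_fst)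
  calc ∫⁻ x, f x ∂μ
      = ∫⁻ x, (∫⁻ t in Set.Ioi (0 : ℝ), {t | ENNReal.ofReal t < f x}.indicator 1 t) ∂μ := by
        simp only [layers]
    _ = ∫⁻ t in Set.Ioi (0 : ℝ), ∫⁻ x, {x | ENNReal.ofReal t < f x}.indicator 1 x ∂μ :=
        lintegral_lintegral_swap (measurable_one.indicator hm).aemeasurable
    _ = _ := by
        simp only [lintegral_indicator_one (measurableSet_lt measurable_const hf)]

theorem antitone_measure_ofReal_lt {α : Type*} [MeasurableSpace α] (μ : Measure α)
    (f : α → ℝ≥0∞) : Antitone fun t : ℝ => μ {x | ENNReal.ofReal t < f x} := fun _ _ hst =>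
  measure_mono fun _ hx => (ENNReal.ofReal_le_ofReal hst).trans_lt hx

theorem measure_le_measure_add_right {G : Type*} [MeasurableSpace G] [AddCommGroup G]
    [MeasurableAdd G] (μ : Measure G) [μ.IsAddLeftInvariant] (A : Set G) {B : Set G}
    (hB : B.Nonempty) : μ A ≤ μ (A + B) := by
  obtain ⟨b, hb⟩ := hB
  calc μ A = μ (b +ᵥ A) := (measure_vadd μ b A).symm
    _ ≤ μ (A + B) := measure_mono <| by
      rintro _ ⟨x, hx, rfl⟩
      exact ⟨x, hx, b, hb, add_comm x b⟩

theorem volume_add_volume_le_of_isCompact {K L : Set ℝ} (hK : IsCompact K) (hL : IsCompact L)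
    (hK0 : K.Nonempty) (hL0 : L.Nonempty) : volume K + volume L ≤ volume (K + L) := by
  obtain ⟨a, haK, ha⟩ := hK.exists_isGreatest hK0
  obtain ⟨b, hbL, hb⟩ := hL.exists_isLeast hL0
  have overlap : (b +ᵥ K) ∩ (a +ᵥ L) ⊆ {a + b} := by
    rintro _ ⟨⟨x, hx, rfl⟩, ⟨y, hy, hxy⟩⟩
    have := ha hx
    have := hb hy
    simp only [vadd_eq_add, Set.mem_singleton_iff] at hxy ⊢
    linarith
  calc volume K + volume L = volume (b +ᵥ K) + volume (a +ᵥ L) := by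
        rw [measure_vadd, measure_vadd]
    _ = volume ((b +ᵥ K) ∪ (a +ᵥ L)) :=
        (measure_union₀' (hK.vadd b).measurableSet.nullMeasurableSet
          (measure_mono_null overlap (by simp))).symm
    _ ≤ volume (K + L) := measure_mono <| by
        rintro _ (⟨x, hx, rfl⟩ | ⟨y, hy, rfl⟩)
        · exact ⟨x, hx, b, hbL, add_comm x b⟩
        · exact ⟨a, haK, y, hy, rfl⟩

theorem volume_add_volume_le_volume_add {A B : Set ℝ} (hA : MeasurableSet A)
    (hB : MeasurableSet B) (hA0 : A.Nonempty) (hB0 : B.Nonempty) :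
    volume A + volume B ≤ volume (A + B) := by
  rcases eq_or_ne (volume A) 0 with hA' | hA'
  · rw [hA', zero_add, add_comm A B]
    exact measure_le_measure_add_right _ _ hA0
  rcases eq_or_ne (volume B) 0 with hB' | hB'
  · rw [hB', add_zero]
    exact measure_le_measure_add_right _ _ hB0
  have approx {a b : ℝ≥0∞} (ha : a < volume A) (hb : b < volume B) : a + b ≤ volume (A + B) := by
    obtain ⟨K, hKA, hK, haK⟩ := hA.exists_lt_isCompact ha
    obtain ⟨L, hLB, hL, hbL⟩ := hB.exists_lt_isCompact hb
    calc a + b ≤ volume K + volume L := add_le_add haK.le hbL.le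
      _ ≤ volume (K + L) := volume_add_volume_le_of_isCompact hK hL
          (nonempty_of_measure_ne_zero haK.ne_bot) (nonempty_of_measure_ne_zero hbL.ne_bot)
      _ ≤ volume (A + B) := measure_mono (Set.add_subset_add hKA hLB)
  refine le_of_forall_lt_imp_le_of_dense fun c hc => ?_
  obtain ⟨a, ha, b, hb, hc⟩ := ENNReal.exists_lt_add_of_lt_add hc hA' hB'
  exact hc.le.trans (approx ha hb)

theorem rpow_mul_rpow_le_ofReal_mul_add_ofReal_mul {a b : ℝ} (ha : 0 < a) (hb : 0 < b)
    (hab : a + b = 1) (x y : ℝ≥0∞) :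
    x ^ a * y ^ b ≤ ENNReal.ofReal a * x + ENNReal.ofReal b * y := by
  rcases eq_or_ne x ∞ with rfl | hx
  · simp [ENNReal.mul_top, ha]
  rcases eq_or_ne y ∞ with rfl | hy
  · simp [ENNReal.mul_top, hb]
  lift x to ℝ≥0 using hx
  lift y to ℝ≥0 using hy
  lift a to ℝ≥0 using ha.le
  lift b to ℝ≥0 using hb.le
  rw [ENNReal.ofReal_coe_nnreal, ENNReal.ofReal_coe_nnreal, ← ENNReal.coe_rpow_of_nonneg _ ha.le,
    ← ENNReal.coe_rpow_of_nonneg _ hb.le]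
  exact_mod_cast NNReal.geom_mean_le_arith_mean2_weighted a b x y (by exact_mod_cast hab)

/-- The Prékopa–Leindler inequality for a measure on a real vector space, as a property of the
measure: it passes to products and linear images. -/
def IsPrekopaLeindler {E : Type*} [AddCommGroup E] [Module ℝ E] [MeasurableSpace E]
    (μ : Measure E) : Prop :=
  ∀ ⦃f g h : E → ℝ≥0∞⦄, Measurable f → Measurable g → Measurable h →
    ∀ ⦃a b : ℝ⦄, 0 < a → 0 < b → a + b = 1 →
      (∀ x y, f x ^ a * g y ^ b ≤ h (a • x + b • y)) →
        (∫⁻ x, f x ∂μ) ^ a * (∫⁻ x, g x ∂μ) ^ b ≤ ∫⁻ x, h x ∂μ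

/-! ### The Prékopa–Leindler inequality on the line -/

section Line

variable {f g h : ℝ → ℝ≥0∞} {a b : ℝ}

theorem setOf_lt_subset_of_rpow_mul_rpow_le (ha : 0 < a) (hb : 0 < b) (hab : a + b = 1)
    (H : ∀ x y, f x ^ a * g y ^ b ≤ h (a • x + b • y)) (t : ℝ≥0∞) :
    a • {x | t < f x} + b • {x | t < g x} ⊆ {x | t < h x} := by
  rintro _ ⟨_, ⟨x, hx, rfl⟩, _, ⟨y, hy, rfl⟩, rfl⟩
  calc t = t ^ a * t ^ b := by
        rw [← ENNReal.rpow_add_of_nonneg _ _ ha.le hb.le, hab, ENNReal.rpow_one]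
    _ < f x ^ a * g y ^ b :=
        ENNReal.mul_lt_mul (ENNReal.rpow_lt_rpow hx ha) (ENNReal.rpow_lt_rpow hy hb)
    _ ≤ h (a • x + b • y) := H x y

theorem lintegral_add_le_of_iSup_eq (hf : Measurable f) (hg : Measurable g) (hh : Measurable h)
    (ha : 0 < a) (hb : 0 < b) (hab : a + b = 1)
    (H : ∀ x y, f x ^ a * g y ^ b ≤ h (a • x + b • y)) (hfg : ⨆ x, f x = ⨆ x, g x) :
    ENNReal.ofReal a * (∫⁻ x, f x) + ENNReal.ofReal b * (∫⁻ x, g x) ≤ ∫⁻ x, h x := by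
  have meas (k : ℝ → ℝ≥0∞) : Measurable fun t : ℝ => volume {x | ENNReal.ofReal t < k x} :=
    (antitone_measure_ofReal_lt volume k).measurable
  have scale {c : ℝ} (hc : 0 < c) (A : Set ℝ) :
      volume (c • A) = ENNReal.ofReal c * volume A := by
    simp [Measure.addHaar_smul, abs_of_pos hc]
  rw [lintegral_eq_lintegral_meas_ofReal_lt _ hf, lintegral_eq_lintegral_meas_ofReal_lt _ hg,
    lintegral_eq_lintegral_meas_ofReal_lt _ hh, ← lintegral_const_mul _ (meas f),
    ← lintegral_const_mul _ (meas g), ← lintegral_add_left ((meas f).const_mul _)]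
  refine lintegral_mono fun t => ?_
  rcases lt_or_ge (ENNReal.ofReal t) (⨆ x, f x) with ht | ht
  · have hfm : MeasurableSet {x | ENNReal.ofReal t < f x} := measurableSet_lt measurable_const hf
    have hgm : MeasurableSet {x | ENNReal.ofReal t < g x} := measurableSet_lt measurable_const hg
    rw [← scale ha, ← scale hb]
    exact (volume_add_volume_le_volume_add (hfm.const_smul₀ a) (hgm.const_smul₀ b)
      (Set.Nonempty.smul_set (lt_iSup_iff.1 ht))
      (Set.Nonempty.smul_set (lt_iSup_iff.1 (ht.trans_eq hfg)))).trans
        (measure_mono (setOf_lt_subset_of_rpow_mul_rpow_le ha hb hab H _))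
  · have hft : {x | ENNReal.ofReal t < f x} = ∅ :=
      Set.eq_empty_of_forall_notMem fun x hx => hx.not_ge ((le_iSup f x).trans ht)
    have hgt : {x | ENNReal.ofReal t < g x} = ∅ :=
      Set.eq_empty_of_forall_notMem fun x hx => hx.not_ge ((le_iSup g x).trans (hfg.ge.trans ht))
    simp [hft, hgt]

theorem lintegral_rpow_mul_le_of_iSup_ne_top (hf : Measurable f) (hg : Measurable g)
    (hh : Measurable h) (ha : 0 < a) (hb : 0 < b) (hab : a + b = 1)
    (H : ∀ x y, f x ^ a * g y ^ b ≤ h (a • x + b • y)) (hf' : ⨆ x, f x ≠ ∞) (hg' : ⨆ x, g x ≠ ∞) :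
    (∫⁻ x, f x) ^ a * (∫⁻ x, g x) ^ b ≤ ∫⁻ x, h x := by
  set F := ⨆ x, f x
  set G := ⨆ x, g x
  rcases eq_or_ne F 0 with hF0 | hF0
  · simp [ENNReal.iSup_eq_zero.1 hF0, ha]
  rcases eq_or_ne G 0 with hG0 | hG0
  · simp [ENNReal.iSup_eq_zero.1 hG0, hb]
  set Q := F ^ a * G ^ b with hQ
  have hQ0 : Q ≠ 0 := by simp [hQ, hF0, hG0, hf', hg']
  have hQt : Q ≠ ∞ := ENNReal.mul_ne_top (by finiteness) (by finiteness)
  have quot (x y : ℝ≥0∞) : (x / F) ^ a * (y / G) ^ b = x ^ a * y ^ b / Q := by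
    rw [ENNReal.div_rpow_of_nonneg _ _ ha.le, ENNReal.div_rpow_of_nonneg _ _ hb.le, hQ,
      ENNReal.mul_div_mul_comm (by simp [hF0, hf']) (by simp [hF0, hf'])]
  have normalized := lintegral_add_le_of_iSup_eq (hf.div_const F) (hg.div_const G)
    (hh.div_const Q) ha hb hab (fun x y => by rw [quot]; gcongr; exact H x y)
    (by rw [← ENNReal.iSup_div, ← ENNReal.iSup_div, ENNReal.div_self hF0 hf',
      ENNReal.div_self hG0 hg'])
  have key := (rpow_mul_rpow_le_ofReal_mul_add_ofReal_mul ha hb hab _ _).trans normalized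
  simp only [div_eq_mul_inv, lintegral_mul_const _ hf, lintegral_mul_const _ hg,
    lintegral_mul_const _ hh] at key quot
  rwa [quot, ENNReal.mul_le_mul_iff_left (by simpa using hQt) (by simpa using hQ0)] at key

theorem isPrekopaLeindler_volume_real : IsPrekopaLeindler (volume : Measure ℝ) := by
  intro f g h hf hg hh a b ha hb hab H
  have trunc (n : ℕ) : (∫⁻ x, min (f x) n) ^ a * (∫⁻ x, min (g x) n) ^ b ≤ ∫⁻ x, h x := by
    refine lintegral_rpow_mul_le_of_iSup_ne_top (hf.min measurable_const)
      (hg.min measurable_const) hh ha hb hab (fun x y => ?_) ?_ ?_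
    · exact (mul_le_mul' (ENNReal.rpow_le_rpow (min_le_left _ _) ha.le)
        (ENNReal.rpow_le_rpow (min_le_left _ _) hb.le)).trans (H x y)
    · exact ((iSup_le fun x => min_le_right _ _).trans_lt (ENNReal.natCast_lt_top n)).ne
    · exact ((iSup_le fun x => min_le_right _ _).trans_lt (ENNReal.natCast_lt_top n)).ne
  have lim {k : ℝ → ℝ≥0∞} (hk : Measurable k) :
      Tendsto (fun n : ℕ => ∫⁻ x, min (k x) n) atTop (𝓝 (∫⁻ x, k x)) := by
    refine lintegral_tendsto_of_tendsto_of_monotone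
      (fun n => (hk.min measurable_const).aemeasurable) (ae_of_all _ fun x m n hmn => ?_)
      (ae_of_all _ fun x => ?_)
    · exact min_le_min_left _ (by exact_mod_cast hmn)
    · simpa using tendsto_const_nhds.min ENNReal.tendsto_nat_nhds_top
  rcases eq_or_ne (∫⁻ x, f x) 0 with hf0 | hf0
  · simp [hf0, ha]
  rcases eq_or_ne (∫⁻ x, g x) 0 with hg0 | hg0
  · simp [hg0, hb]
  exact le_of_tendsto (ENNReal.Tendsto.mul ((lim hf).ennrpow_const a) (by simp [hf0, ha, ha.le])
    ((lim hg).ennrpow_const b) (by simp [hg0, hb, hb.le])) (Eventually.of_forall trunc)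

end Line

section Haar

variable {E F : Type*} [AddCommGroup E] [Module ℝ E] [MeasurableSpace E]
  [AddCommGroup F] [Module ℝ F] [MeasurableSpace F] {μ : Measure E} {ν : Measure F}

theorem isPrekopaLeindler_dirac_zero :
    IsPrekopaLeindler (Measure.dirac (0 : E)) := by
  intro f g h hf hg hh a b _ _ _ H
  rw [lintegral_dirac' _ hf, lintegral_dirac' _ hg, lintegral_dirac' _ hh]
  simpa using H 0 0

theorem IsPrekopaLeindler.smul (hμ : IsPrekopaLeindler μ) (c : ℝ≥0∞) :
    IsPrekopaLeindler (c • μ) := by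
  intro f g h hf hg hh a b ha hb hab H
  simp only [lintegral_smul_measure, smul_eq_mul]
  calc (c * ∫⁻ x, f x ∂μ) ^ a * (c * ∫⁻ x, g x ∂μ) ^ b
      = c ^ (a + b) * ((∫⁻ x, f x ∂μ) ^ a * (∫⁻ x, g x ∂μ) ^ b) := by
        rw [ENNReal.mul_rpow_of_nonneg _ _ ha.le, ENNReal.mul_rpow_of_nonneg _ _ hb.le,
          ENNReal.rpow_add_of_nonneg _ _ ha.le hb.le, mul_mul_mul_comm]
    _ ≤ c * ∫⁻ x, h x ∂μ := by
        rw [hab, ENNReal.rpow_one]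
        gcongr
        exact hμ hf hg hh ha hb hab H

theorem IsPrekopaLeindler.map (hμ : IsPrekopaLeindler μ) {L : E →ₗ[ℝ] F} (hL : Measurable L) :
    IsPrekopaLeindler (μ.map L) := by
  intro f g h hf hg hh a b ha hb hab H
  rw [lintegral_map hf hL, lintegral_map hg hL, lintegral_map hh hL]
  exact hμ (hf.comp hL) (hg.comp hL) (hh.comp hL) ha hb hab fun x y => by
    simpa using H (L x) (L y)

theorem IsPrekopaLeindler.prod [SFinite ν] (hμ : IsPrekopaLeindler μ) (hν : IsPrekopaLeindler ν) :
    IsPrekopaLeindler (μ.prod ν) := by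
  intro f g h hf hg hh a b ha hb hab H
  rw [lintegral_prod _ hf.aemeasurable, lintegral_prod _ hg.aemeasurable,
    lintegral_prod _ hh.aemeasurable]
  refine hμ hf.lintegral_prod_right' hg.lintegral_prod_right' hh.lintegral_prod_right'
    ha hb hab fun x x' => ?_
  exact hν (hf.comp measurable_prodMk_left) (hg.comp measurable_prodMk_left)
    (hh.comp measurable_prodMk_left) ha hb hab fun y y' => H (x, y) (x', y')

theorem isPrekopaLeindler_volume_pi (n : ℕ) :
    IsPrekopaLeindler (volume : Measure (Fin n → ℝ)) := by
  induction n with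
  | zero =>
    rw [volume_pi, Measure.pi_of_empty (x := 0)]
    exact isPrekopaLeindler_dirac_zero
  | succ n ih =>
    have hL := (volume_preserving_piFinSuccAbove (fun _ : Fin (n + 1) => ℝ) 0).symm
    have hcons : ⇑(MeasurableEquiv.piFinSuccAbove (fun _ : Fin (n + 1) => ℝ) 0).symm
        = (Fin.consLinearEquiv ℝ (fun _ : Fin (n + 1) => ℝ)).toLinearMap := by
      ext p i
      simp [MeasurableEquiv.piFinSuccAbove, Fin.insertNthEquiv, Fin.insertNth_zero']
    rw [← hL.map_eq, hcons]
    exact (isPrekopaLeindler_volume_real.prod ih).map (hcons ▸ hL.measurable)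

end Haar

theorem isPrekopaLeindler_of_isAddHaarMeasure {E : Type*} [NormedAddCommGroup E] [NormedSpace ℝ E]
    [FiniteDimensional ℝ E] [MeasurableSpace E] [BorelSpace E] (μ : Measure E)
    [μ.IsAddHaarMeasure] : IsPrekopaLeindler μ := by
  let L := (ContinuousLinearEquiv.ofFinrankEq (𝕜 := ℝ)
    (Module.finrank_fin_fun ℝ (n := Module.finrank ℝ E)) : _ ≃L[ℝ] E)
  have := L.isAddHaarMeasure_map volume
  rw [Measure.isAddLeftInvariant_eq_smul μ (volume.map L)]
  exact ((isPrekopaLeindler_volume_pi _).map (L := L.toLinearEquiv.toLinearMap)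
    L.continuous.measurable).smul _

end PrekopaLeindler

section BrunnMinkowski

variable {E : Type*} [NormedAddCommGroup E] [NormedSpace ℝ E]
  [FiniteDimensional ℝ E] [MeasurableSpace E] [BorelSpace E] (μ : Measure E) [μ.IsAddHaarMeasure]
  {A B : Set E}

theorem measure_rpow_mul_rpow_le (hA : MeasurableSet A) (hB : MeasurableSet B) {a b : ℝ}
    (ha : 0 < a) (hb : 0 < b) (hab : a + b = 1) :
    μ A ^ a * μ B ^ b ≤ μ (a • A + b • B) := by
  have hC := measurableSet_toMeasurable μ (a • A + b • B)
  have key := isPrekopaLeindler_of_isAddHaarMeasure μ (measurable_one.indicator hA)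
    (measurable_one.indicator hB) (measurable_one.indicator hC) ha hb hab fun x y => by
      by_cases hx : x ∈ A
      · by_cases hy : y ∈ B
        · have : a • x + b • y ∈ toMeasurable μ (a • A + b • B) :=
            subset_toMeasurable _ _ (Set.add_mem_add (Set.smul_mem_smul_set hx)
              (Set.smul_mem_smul_set hy))
          simp [hx, hy, this]
        · simp [hy, hb]
      · simp [hx, ha]
  rwa [lintegral_indicator_one hA, lintegral_indicator_one hB, lintegral_indicator_one hC,
    measure_toMeasurable] at key

open Module in
theorem ofReal_add_pow_finrank_le_measure_add (hA : MeasurableSet A) (hB : MeasurableSet B)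
    {α β : ℝ} (hα : 0 < α) (hβ : 0 < β) (hAα : μ A = ENNReal.ofReal (α ^ finrank ℝ E))
    (hBβ : μ B = ENNReal.ofReal (β ^ finrank ℝ E)) :
    ENNReal.ofReal ((α + β) ^ finrank ℝ E) ≤ μ (A + B) := by
  -- Dilate `A` and `B` to have equal measures: the multiplicative inequality is then sharp.
  have dilate {C : Set E} {γ : ℝ} (hγ : 0 < γ) (hC : μ C = ENNReal.ofReal (γ ^ finrank ℝ E)) :
      μ ((γ / (α + β))⁻¹ • C) = ENNReal.ofReal ((α + β) ^ finrank ℝ E) := by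
    rw [Measure.addHaar_smul, hC, ← ENNReal.ofReal_mul (abs_nonneg _), abs_of_pos (by positivity),
      ← mul_pow, inv_div, div_mul_cancel₀ _ hγ.ne']
  have hab : α / (α + β) + β / (α + β) = 1 := by field_simp
  have key := measure_rpow_mul_rpow_le μ (hA.const_smul₀ (α / (α + β))⁻¹)
    (hB.const_smul₀ (β / (α + β))⁻¹) (by positivity) (by positivity) hab
  rwa [smul_inv_smul₀ (by positivity), smul_inv_smul₀ (by positivity), dilate hα hAα,
    dilate hβ hBβ, ← ENNReal.rpow_add_of_nonneg _ _ (by positivity) (by positivity), hab,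
    ENNReal.rpow_one] at key

open Module in
theorem brunnMinkowski [Nontrivial E] (hA : MeasurableSet A) (hB : MeasurableSet B)
    (hA0 : A.Nonempty) (hB0 : B.Nonempty) :
    μ A ^ (1 / finrank ℝ E : ℝ) + μ B ^ (1 / finrank ℝ E : ℝ)
      ≤ μ (A + B) ^ (1 / finrank ℝ E : ℝ) := by
  have hd : 0 < (finrank ℝ E : ℝ) := by exact_mod_cast finrank_pos
  have hd' : 0 < (1 / finrank ℝ E : ℝ) := by positivity
  have hle_right : μ B ≤ μ (A + B) := add_comm A B ▸ measure_le_measure_add_right μ B hA0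
  have hle_left : μ A ≤ μ (A + B) := measure_le_measure_add_right μ A hB0
  rcases eq_or_ne (μ A) 0 with hA' | hA'
  · rw [hA', ENNReal.zero_rpow_of_pos hd', zero_add]
    gcongr
  rcases eq_or_ne (μ B) 0 with hB' | hB'
  · rw [hB', ENNReal.zero_rpow_of_pos hd', add_zero]
    gcongr
  rcases eq_or_ne (μ (A + B)) ∞ with hAB | hAB
  · rw [hAB, ENNReal.top_rpow_of_pos hd']
    exact le_top
  have root {C : Set E} (hC0 : μ C ≠ 0) (hC : μ C ≠ ∞) :
      ∃ γ : ℝ, 0 < γ ∧ μ C = ENNReal.ofReal (γ ^ finrank ℝ E) := by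
    refine ⟨(μ C).toReal ^ (1 / finrank ℝ E : ℝ),
      Real.rpow_pos_of_pos (ENNReal.toReal_pos hC0 hC) _, ?_⟩
    rw [← Real.rpow_natCast, ← Real.rpow_mul ENNReal.toReal_nonneg, one_div_mul_cancel hd.ne',
      Real.rpow_one, ENNReal.ofReal_toReal hC]
  have root_pow {γ : ℝ} (hγ : 0 < γ) :
      ENNReal.ofReal (γ ^ finrank ℝ E) ^ (1 / finrank ℝ E : ℝ) = ENNReal.ofReal γ := by
    rw [ENNReal.ofReal_rpow_of_pos (by positivity), ← Real.rpow_natCast, ← Real.rpow_mul hγ.le,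
      mul_one_div_cancel hd.ne', Real.rpow_one]
  obtain ⟨α, hα, hAα⟩ := root hA' (ne_top_of_le_ne_top hAB hle_left)
  obtain ⟨β, hβ, hBβ⟩ := root hB' (ne_top_of_le_ne_top hAB hle_right)
  rw [hAα, hBβ, root_pow hα, root_pow hβ, ← ENNReal.ofReal_add hα.le hβ.le,
    ← root_pow (add_pos hα hβ)]
  exact ENNReal.rpow_le_rpow (ofReal_add_pow_finrank_le_measure_add μ hA hB hα hβ hAα hBβ) hd'.le

theorem pow_add_mul_pow_mul_le_add_pow (x y : ℝ≥0∞) (n : ℕ) :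
    x ^ (n + 1) + (n + 1) * (x ^ n * y) ≤ (x + y) ^ (n + 1) := by
  induction n with
  | zero => simp
  | succ n ih =>
    calc x ^ (n + 1 + 1) + ((n + 1 : ℕ) + 1) * (x ^ (n + 1) * y)
        ≤ (x ^ (n + 1) + (n + 1) * (x ^ n * y)) * (x + y) := by
          calc _ ≤ x ^ (n + 1 + 1) + ((n + 1 : ℕ) + 1) * (x ^ (n + 1) * y)
                + (n + 1) * (x ^ n * y * y) := le_self_add
            _ = _ := by push_cast; ring
      _ ≤ (x + y) ^ (n + 1) * (x + y) := by gcongr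
      _ = (x + y) ^ (n + 1 + 1) := (pow_succ _ _).symm

open Module in
theorem measure_add_finrank_mul_le_measure_add (hd : 1 < finrank ℝ E) (hA : MeasurableSet A)
    (hB : MeasurableSet B) (hB0 : B.Nonempty) :
    μ A + finrank ℝ E * (μ A ^ (1 - 1 / finrank ℝ E : ℝ) * μ B ^ (1 / finrank ℝ E : ℝ))
      ≤ μ (A + B) := by
  rcases A.eq_empty_or_nonempty with rfl | hA0
  · have : (0 : ℝ) < 1 - 1 / finrank ℝ E := by
      rw [sub_pos, div_lt_one (by positivity)]
      exact_mod_cast hd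
    simp [-one_div, this]
  have : Nontrivial E := nontrivial_of_finrank_pos (R := ℝ) (by lia)
  obtain ⟨n, hn⟩ : ∃ n, finrank ℝ E = n + 1 := ⟨_, (Nat.succ_pred_eq_of_pos (by lia)).symm⟩
  have key := brunnMinkowski μ hA hB hA0 hB0
  rw [hn] at key ⊢
  have hn' : ((n + 1 : ℕ) : ℝ) ≠ 0 := by positivity
  have pow_root (x : ℝ≥0∞) : (x ^ (1 / (n + 1 : ℕ) : ℝ)) ^ (n + 1) = x := by
    rw [← ENNReal.rpow_natCast, ← ENNReal.rpow_mul, one_div_mul_cancel hn', ENNReal.rpow_one]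
  have pow_root' (x : ℝ≥0∞) :
      (x ^ (1 / (n + 1 : ℕ) : ℝ)) ^ n = x ^ (1 - 1 / (n + 1 : ℕ) : ℝ) := by
    rw [← ENNReal.rpow_natCast, ← ENNReal.rpow_mul]
    congr 1
    field_simp
    push_cast
    ring
  calc μ A + (n + 1 : ℕ) * (μ A ^ (1 - 1 / (n + 1 : ℕ) : ℝ) * μ B ^ (1 / (n + 1 : ℕ) : ℝ))
      ≤ (μ A ^ (1 / (n + 1 : ℕ) : ℝ) + μ B ^ (1 / (n + 1 : ℕ) : ℝ)) ^ (n + 1) := by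
        refine le_trans (le_of_eq ?_) (pow_add_mul_pow_mul_le_add_pow _ _ n)
        rw [pow_root, pow_root']
        push_cast
        rfl
    _ ≤ (μ (A + B) ^ (1 / (n + 1 : ℕ) : ℝ)) ^ (n + 1) := by gcongr
    _ = μ (A + B) := pow_root _

end BrunnMinkowski

section Sobolev

variable {E : Type*} [NormedAddCommGroup E] [NormedSpace ℝ E] [MeasurableSpace E]

/-- The layer-cake integral `∫₀^∞ μ {‖w‖ > t} ^ p dt`, for `p ≤ 1` a multiple of the Lorentz
`L^{1/p, 1}` norm of `w`. -/
noncomputable def lorentzIntegral {α F : Type*} [MeasurableSpace α] [ENorm F] (μ : Measure α)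
    (p : ℝ) (w : α → F) : ℝ≥0∞ :=
  ∫⁻ t in Set.Ioi (0 : ℝ), μ {x | ENNReal.ofReal t < ‖w x‖ₑ} ^ p

/-- The pointwise anisotropic size `sup_{b ∈ B} ‖∂_b W‖` of the derivative, the support function
of `B` evaluated at `∇W` when `B` is symmetric. -/
noncomputable def fderivSup {F : Type*} [NormedAddCommGroup F] [NormedSpace ℝ F] (B : Set E)
    (W : E → F) (x : E) : ℝ≥0∞ :=
  ⨆ b ∈ B, ‖fderiv ℝ W x b‖ₑ

variable {F : Type*} [NormedAddCommGroup F] [NormedSpace ℝ F] {B : Set E} {W : E → F}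

theorem measurable_fderivSup [OpensMeasurableSpace E] (hW : ContDiff ℝ 1 W) :
    Measurable (fderivSup B W) :=
  (lowerSemicontinuous_biSup fun _ _ =>
    ((hW.continuous_fderiv one_ne_zero).clm_apply
      continuous_const).enorm.lowerSemicontinuous).measurable

omit [MeasurableSpace E] in
theorem exists_norm_sub_sub_fderiv_le (hW : ContDiff ℝ 1 W) (hc : HasCompactSupport W) {ε : ℝ}
    (hε : 0 < ε) :
    ∃ δ > 0, ∀ x y, ‖x - y‖ < δ → ‖W x - W y - fderiv ℝ W y (x - y)‖ ≤ ε * ‖x - y‖ := by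
  have huc : UniformContinuous (fderiv ℝ W) :=
    (hc.fderiv ℝ).uniformContinuous_of_continuous (hW.continuous_fderiv one_ne_zero)
  obtain ⟨δ, hδ, hfd⟩ := Metric.uniformContinuous_iff.1 huc ε hε
  exact ⟨δ, hδ, fun x y hxy => (convex_ball y δ).norm_image_sub_le_of_norm_fderiv_le' (𝕜 := ℝ)
    (fun z _ => hW.differentiable one_ne_zero z)
    (fun z hz => (dist_eq_norm _ _).symm.trans_le (hfd hz).le) (Metric.mem_ball_self hδ)
    (mem_ball_iff_norm.2 hxy)⟩

omit [MeasurableSpace E] in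
theorem exists_enorm_le_enorm_add_fderivSup (hW : ContDiff ℝ 1 W) (hc : HasCompactSupport W)
    (hB : Bornology.IsBounded B) {η : ℝ≥0} (hη : 0 < η) :
    ∃ h : ℝ≥0, 0 < h ∧ h ≤ 1 ∧ ∀ x, ∀ b ∈ B,
      ‖W x‖ₑ ≤ ‖W (x + h • b)‖ₑ + h * (fderivSup B W (x + h • b) + η) := by
  obtain ⟨M, hM, hBM⟩ := hB.exists_pos_norm_le
  obtain ⟨δ, hδ, hWδ⟩ := exists_norm_sub_sub_fderiv_le hW hc (ε := η / M) (by positivity)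
  have hh : 0 < min (δ / (2 * M)) 1 := by positivity
  lift min (δ / (2 * M)) 1 to ℝ≥0 using hh.le with h hhdef
  refine ⟨h, hh, by exact_mod_cast hhdef.trans_le (min_le_right _ _), fun x b hb => ?_⟩
  set y := x + h • b with hy
  have hxy : x - y = -(h • b) := by rw [hy]; abel
  have hhM : ‖x - y‖ ≤ h * M := by
    rw [hxy, norm_neg, NNReal.smul_def, norm_smul, Real.norm_of_nonneg hh.le]
    gcongr
    exact hBM b hb
  have hhδ : (h : ℝ) * M < δ := by
    have : (h : ℝ) ≤ δ / (2 * M) := hhdef.trans_le (min_le_left _ _)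
    rw [le_div_iff₀ (by positivity)] at this
    nlinarith
  have remainder : ‖W x - W y - fderiv ℝ W y (x - y)‖ ≤ h * η :=
    calc ‖W x - W y - fderiv ℝ W y (x - y)‖ ≤ η / M * ‖x - y‖ := hWδ x y (hhM.trans_lt hhδ)
      _ ≤ η / M * (h * M) := by gcongr
      _ = h * η := by field_simp
  calc ‖W x‖ₑ = ‖W y + (fderiv ℝ W y (x - y) + (W x - W y - fderiv ℝ W y (x - y)))‖ₑ := by
        congr 1
        abel
    _ ≤ ‖W y‖ₑ + (‖fderiv ℝ W y (x - y)‖ₑ + ‖W x - W y - fderiv ℝ W y (x - y)‖ₑ) :=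
        (enorm_add_le _ _).trans (by gcongr; exact enorm_add_le _ _)
    _ ≤ ‖W y‖ₑ + (h * fderivSup B W y + h * η) := by
        gcongr
        · rw [hxy, map_neg, enorm_neg, NNReal.smul_def, map_smul, enorm_smul]
          gcongr
          · simp
          · exact le_iSup₂ (f := fun b _ => ‖fderiv ℝ W y b‖ₑ) b hb
        · rw [← ofReal_norm]
          exact (ENNReal.ofReal_le_ofReal remainder).trans_eq (by simp [ENNReal.ofReal_mul])
    _ = _ := by rw [mul_add]

/-! ### The anisotropic Sobolev inequality -/

open Module

variable [BorelSpace E] [FiniteDimensional ℝ E] (μ : Measure E) [μ.IsAddHaarMeasure]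

theorem measure_nnreal_smul_rpow (hd : 0 < finrank ℝ E) (h : ℝ≥0) (B : Set E) :
    μ (h • B) ^ (1 / finrank ℝ E : ℝ) = h * μ B ^ (1 / finrank ℝ E : ℝ) := by
  have hd0 : (finrank ℝ E : ℝ) ≠ 0 := by positivity
  have hdilate : μ (h • B) = (h : ℝ≥0∞) ^ finrank ℝ E * μ B := by
    rw [show h • B = (h : ℝ) • B from rfl, Measure.addHaar_smul, abs_of_nonneg (by positivity),
      ENNReal.ofReal_pow h.coe_nonneg, ENNReal.ofReal_coe_nnreal]
  rw [hdilate, ENNReal.mul_rpow_of_nonneg _ _ (by positivity), ← ENNReal.rpow_natCast,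
    ← ENNReal.rpow_mul, mul_one_div_cancel hd0, ENNReal.rpow_one]

omit [NormedSpace ℝ F] in
theorem lintegral_enorm_add_mul_lorentzIntegral_le (hd : 1 < finrank ℝ E) {w : E → F}
    (hw : Measurable fun x => ‖w x‖ₑ) {k : E → ℝ≥0∞} (hk : Measurable k) (hB : MeasurableSet B)
    (hB0 : B.Nonempty) {h : ℝ≥0}
    (hwk : ∀ x, w x ≠ 0 → ∀ b ∈ B, ‖w x‖ₑ ≤ k (x + h • b)) :
    (∫⁻ x, ‖w x‖ₑ ∂μ) + h * (finrank ℝ E * μ B ^ (1 / finrank ℝ E : ℝ)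
      * lorentzIntegral μ (1 - 1 / finrank ℝ E) w) ≤ ∫⁻ x, k x ∂μ := by
  have level (t : ℝ) : μ {x | ENNReal.ofReal t < ‖w x‖ₑ}
      + h * (finrank ℝ E * μ B ^ (1 / finrank ℝ E : ℝ))
        * μ {x | ENNReal.ofReal t < ‖w x‖ₑ} ^ (1 - 1 / finrank ℝ E : ℝ)
      ≤ μ {x | ENNReal.ofReal t < k x} := by
    have hsub : {x | ENNReal.ofReal t < ‖w x‖ₑ} + h • B ⊆ {x | ENNReal.ofReal t < k x} := by
      rintro _ ⟨x, hx, _, ⟨b, hb, rfl⟩, rfl⟩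
      exact lt_of_lt_of_le hx (hwk x (fun h0 => by simp [h0] at hx) b hb)
    refine le_trans (le_of_eq ?_) ((measure_add_finrank_mul_le_measure_add μ hd
      (measurableSet_lt measurable_const hw) (hB.const_smul₀ h) hB0.smul_set).trans
        (measure_mono hsub))
    rw [measure_nnreal_smul_rpow μ (by lia)]
    ring
  have anti := antitone_measure_ofReal_lt μ fun x => ‖w x‖ₑ
  rw [lintegral_eq_lintegral_meas_ofReal_lt μ hw, lintegral_eq_lintegral_meas_ofReal_lt μ hk,
    lorentzIntegral, ← mul_assoc, ← lintegral_const_mul _ (anti.measurable.pow_const _),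
    ← lintegral_add_left anti.measurable]
  exact lintegral_mono level

theorem finrank_mul_lorentzIntegral_le_add (hd : 1 < finrank ℝ E) (hW : ContDiff ℝ 1 W)
    (hc : HasCompactSupport W) (hB : MeasurableSet B) (hB0 : B.Nonempty) {K : Set E}
    (hK : MeasurableSet K) {h η : ℝ≥0} (hh : 0 < h) (hWK : ∀ x ∈ tsupport W, ∀ b ∈ B, x + h • b ∈ K)
    (hWh : ∀ x, ∀ b ∈ B, ‖W x‖ₑ ≤ ‖W (x + h • b)‖ₑ + h * (fderivSup B W (x + h • b) + η)) :
    finrank ℝ E * μ B ^ (1 / finrank ℝ E : ℝ) * lorentzIntegral μ (1 - 1 / finrank ℝ E) W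
      ≤ (∫⁻ x, fderivSup B W x ∂μ) + η * μ K := by
  have hmW : Measurable fun x => ‖W x‖ₑ := hW.continuous.enorm.measurable
  have hmg : Measurable fun x => fderivSup B W x := measurable_fderivSup hW
  have hmgη : Measurable fun x => fderivSup B W x + K.indicator (fun _ => (η : ℝ≥0∞)) x :=
    hmg.add (measurable_const.indicator hK)
  have key := lintegral_enorm_add_mul_lorentzIntegral_le μ hd hmW (h := h)
    (k := fun x => ‖W x‖ₑ + h * (fderivSup B W x + K.indicator (fun _ => (η : ℝ≥0∞)) x))
    (hmW.add (hmgη.const_mul _)) hB hB0 fun x hx b hb => by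
      simpa only [Set.indicator_of_mem (hWK x (subset_tsupport W hx) b hb)] using hWh x b hb
  rw [lintegral_add_left hmW, lintegral_const_mul _ hmgη, lintegral_add_left hmg,
    lintegral_indicator_const hK] at key
  have hW1 : ∫⁻ x, ‖W x‖ₑ ∂μ ≠ ∞ :=
    (hW.continuous.integrable_of_hasCompactSupport (μ := μ) hc).2.ne
  rwa [ENNReal.add_le_add_iff_left hW1,
    ENNReal.mul_le_mul_iff_right (by simpa using hh.ne') ENNReal.coe_ne_top] at key

theorem anisotropic_sobolev (hd : 1 < finrank ℝ E) (hW : ContDiff ℝ 1 W)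
    (hc : HasCompactSupport W) (hB : MeasurableSet B) (hB' : Bornology.IsBounded B) :
    finrank ℝ E * μ B ^ (1 / finrank ℝ E : ℝ) * lorentzIntegral μ (1 - 1 / finrank ℝ E) W
      ≤ ∫⁻ x, fderivSup B W x ∂μ := by
  rcases B.eq_empty_or_nonempty with rfl | hB0
  · have hd0 : 0 < (1 / finrank ℝ E : ℝ) := by positivity
    simp [-one_div, hd0]
  obtain ⟨M, -, hBM⟩ := hB'.exists_pos_norm_le
  have hK : IsCompact (tsupport W + Metric.closedBall 0 M) :=
    IsCompact.add hc (isCompact_closedBall 0 M)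
  have approx (η : ℝ≥0) (hη : 0 < η) :
      finrank ℝ E * μ B ^ (1 / finrank ℝ E : ℝ) * lorentzIntegral μ (1 - 1 / finrank ℝ E) W
        ≤ (∫⁻ x, fderivSup B W x ∂μ) + η * μ (tsupport W + Metric.closedBall 0 M) := by
    obtain ⟨h, hh, hh1, hWh⟩ := exists_enorm_le_enorm_add_fderivSup hW hc hB' hη
    refine finrank_mul_lorentzIntegral_le_add μ hd hW hc hB hB0 hK.measurableSet hh
      (fun x hx b hb => Set.add_mem_add hx ?_) hWh
    rw [mem_closedBall_zero_iff, NNReal.smul_def, norm_smul, NNReal.norm_eq]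
    calc (h : ℝ) * ‖b‖ ≤ 1 * M := by gcongr; exacts [by exact_mod_cast hh1, hBM b hb]
      _ = M := one_mul M
  have lim : Tendsto (fun η : ℝ≥0 => (∫⁻ x, fderivSup B W x ∂μ)
      + η * μ (tsupport W + Metric.closedBall 0 M)) (𝓝[>] 0) (𝓝 (∫⁻ x, fderivSup B W x ∂μ)) := by
    have : Tendsto (fun η : ℝ≥0 => (η : ℝ≥0∞) * μ (tsupport W + Metric.closedBall 0 M))
        (𝓝[>] 0) (𝓝 0) := by
      have hη : Tendsto (fun η : ℝ≥0 => (η : ℝ≥0∞)) (𝓝[>] 0) (𝓝 0) :=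
        ENNReal.tendsto_coe.2 (tendsto_id.mono_left nhdsWithin_le_nhds)
      simpa using ENNReal.Tendsto.mul_const hη (Or.inr (hK.measure_lt_top (μ := μ)).ne)
    simpa using tendsto_const_nhds.add this
  exact ge_of_tendsto lim (eventually_nhdsWithin_of_forall approx)

/-! ### Functions of bounded variation -/

/-- The distributional derivatives of `w` in the directions `b ∈ B` are dominated by the measure
`ν`; when `B` is the closed unit ball, this says that the variation of `Dw` is at most `ν`. -/
def HasVariationLE (B : Set E) (w : E → ℝ) (ν : Measure E) : Prop :=
  ∀ b ∈ B, ∀ ψ : E → ℝ, ContDiff ℝ 1 ψ → HasCompactSupport ψ → (∀ x, 0 ≤ ψ x) →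
    |∫ x, w x * fderiv ℝ ψ x b ∂μ| ≤ ∫ x, ψ x ∂ν

open Convolution ContinuousLinearMap

variable {μ} {w φ : E → ℝ} {ν : Measure E}

theorem fderiv_convolution_apply (hw : LocallyIntegrable w μ) (hφ : ContDiff ℝ 1 φ)
    (hφc : HasCompactSupport φ) (q b : E) :
    fderiv ℝ (φ ⋆[lsmul ℝ ℝ, μ] w) q b = ∫ x, w x * fderiv ℝ φ (q - x) b ∂μ := by
  rw [← convolution_flip, (hφc.hasFDerivAt_convolution_right _ hw hφ q).fderiv,
    convolution_precompR_apply _ hw (hφc.fderiv ℝ) (hφ.continuous_fderiv one_ne_zero)]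
  simp only [convolution_def, flip_apply, lsmul_apply, smul_eq_mul, mul_comm]

theorem HasVariationLE.fderivSup_convolution_le [IsFiniteMeasureOnCompacts ν]
    (h : HasVariationLE μ B w ν) (hw : LocallyIntegrable w μ) (hφ : ContDiff ℝ 1 φ)
    (hφc : HasCompactSupport φ) (hφ0 : ∀ x, 0 ≤ φ x) (q : E) :
    fderivSup B (φ ⋆[lsmul ℝ ℝ, μ] w) q ≤ ∫⁻ x, ENNReal.ofReal (φ (q - x)) ∂ν := by
  refine iSup₂_le fun b hb => ?_
  have hφq : ContDiff ℝ 1 fun x => φ (q - x) := hφ.comp (contDiff_const.sub contDiff_id)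
  have hφqc : HasCompactSupport fun x => φ (q - x) :=
    hφc.comp_homeomorph (Homeomorph.subLeft q)
  have hderiv (x : E) : fderiv ℝ (fun x => φ (q - x)) x b = -fderiv ℝ φ (q - x) b := by
    have := (hφ.differentiable one_ne_zero (q - x)).hasFDerivAt.comp x
      ((hasFDerivAt_id x).const_sub q)
    rw [HasFDerivAt.fderiv (f := fun x => φ (q - x)) this]
    simp
  have key := h b hb _ hφq hφqc fun x => hφ0 _
  simp only [hderiv, mul_neg, integral_neg, abs_neg] at key
  rw [fderiv_convolution_apply hw hφ hφc, ← ofReal_integral_eq_lintegral_ofReal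
    (hφq.continuous.integrable_of_hasCompactSupport hφqc) (Eventually.of_forall fun x => hφ0 _),
    Real.enorm_eq_ofReal_abs]
  exact ENNReal.ofReal_le_ofReal key

theorem HasVariationLE.lintegral_fderivSup_convolution_le [IsFiniteMeasureOnCompacts ν]
    (h : HasVariationLE μ B w ν) (hw : LocallyIntegrable w μ) (hφ : ContDiff ℝ 1 φ)
    (hφc : HasCompactSupport φ) (hφ0 : ∀ x, 0 ≤ φ x) (hφ1 : ∫ x, φ x ∂μ = 1) :
    ∫⁻ q, fderivSup B (φ ⋆[lsmul ℝ ℝ, μ] w) q ∂μ ≤ ν Set.univ := by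
  have : ProperSpace E := FiniteDimensional.proper ℝ E
  have mass (x : E) : ∫⁻ q, ENNReal.ofReal (φ (q - x)) ∂μ = 1 := by
    rw [lintegral_sub_right_eq_self (fun q => ENNReal.ofReal (φ q)),
      ← ofReal_integral_eq_lintegral_ofReal (hφ.continuous.integrable_of_hasCompactSupport hφc)
        (Eventually.of_forall hφ0), hφ1, ENNReal.ofReal_one]
  calc ∫⁻ q, fderivSup B (φ ⋆[lsmul ℝ ℝ, μ] w) q ∂μ
      ≤ ∫⁻ q, ∫⁻ x, ENNReal.ofReal (φ (q - x)) ∂ν ∂μ :=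
        lintegral_mono (h.fderivSup_convolution_le hw hφ hφc hφ0)
    _ = ∫⁻ x, ∫⁻ q, ENNReal.ofReal (φ (q - x)) ∂μ ∂ν :=
        lintegral_lintegral_swap
          (hφ.continuous.comp continuous_sub).measurable.ennreal_ofReal.aemeasurable
    _ = ν Set.univ := by simp only [mass, lintegral_one]

theorem measure_le_liminf_measure {α : Type*} [MeasurableSpace α] {μ : Measure α}
    {S : ℕ → Set α} {T : Set α} (h : ∀ᵐ x ∂μ, x ∈ T → ∀ᶠ n in atTop, x ∈ S n) :
    μ T ≤ liminf (fun n => μ (S n)) atTop := by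
  calc μ T ≤ μ (⋃ N : ℕ, ⋂ n ≥ N, S n) := by
        refine measure_mono_ae (h.mono fun x hx hT => ?_)
        obtain ⟨N, hN⟩ := eventually_atTop.1 (hx hT)
        exact Set.mem_iUnion.2 ⟨N, Set.mem_iInter₂.2 hN⟩
    _ = ⨆ N : ℕ, μ (⋂ n ≥ N, S n) := Monotone.measure_iUnion fun _ _ hab =>
        Set.biInter_subset_biInter_left fun _ hn => hab.trans hn
    _ ≤ liminf (fun n => μ (S n)) atTop := by
        rw [liminf_eq_iSup_iInf_of_nat]
        exact iSup_mono fun N => le_iInf₂ fun n hn => measure_mono (Set.iInter₂_subset n hn)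

theorem lorentzIntegral_le_liminf {α F : Type*} [MeasurableSpace α] [NormedAddCommGroup F]
    {μ : Measure α} {p : ℝ} (hp : 0 ≤ p) {W : ℕ → α → F} {w : α → F}
    (h : ∀ᵐ x ∂μ, Tendsto (fun n => W n x) atTop (𝓝 (w x))) :
    lorentzIntegral μ p w ≤ liminf (fun n => lorentzIntegral μ p (W n)) atTop := by
  calc lorentzIntegral μ p w
      ≤ ∫⁻ t in Set.Ioi (0 : ℝ),
          liminf (fun n => μ {x | ENNReal.ofReal t < ‖W n x‖ₑ} ^ p) atTop := by
        refine lintegral_mono fun t => ?_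
        have level : μ {x | ENNReal.ofReal t < ‖w x‖ₑ}
            ≤ liminf (fun n => μ {x | ENNReal.ofReal t < ‖W n x‖ₑ}) atTop :=
          measure_le_liminf_measure (h.mono fun x hx hT => hx.enorm.eventually_const_lt hT)
        exact (ENNReal.rpow_le_rpow level hp).trans_eq
          ((ENNReal.monotone_rpow_of_nonneg hp).map_liminf_of_continuousAt _
            ENNReal.continuous_rpow_const.continuousAt)
    _ ≤ liminf (fun n => lorentzIntegral μ p (W n)) atTop :=
        lintegral_liminf_le fun n => (antitone_measure_ofReal_lt μ _).measurable.pow_const p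

theorem HasVariationLE.anisotropic_sobolev [IsFiniteMeasureOnCompacts ν]
    (h : HasVariationLE μ B w ν) (hd : 1 < finrank ℝ E) (hw : Integrable w μ)
    (hwc : HasCompactSupport w) (hB : MeasurableSet B) (hB' : Bornology.IsBounded B) :
    finrank ℝ E * μ B ^ (1 / finrank ℝ E : ℝ) * lorentzIntegral μ (1 - 1 / finrank ℝ E) w
      ≤ ν Set.univ := by
  let φ (n : ℕ) : ContDiffBump (0 : E) :=
    ⟨1 / (n + 1), 2 * (1 / (n + 1)), by positivity, lt_two_mul_self (by positivity)⟩
  have hlim : Tendsto (fun n => (φ n).rOut) atTop (𝓝 0) := by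
    simpa only [mul_zero] using
      (tendsto_one_div_add_atTop_nhds_zero_nat (𝕜 := ℝ)).const_mul 2
  have hae : ∀ᵐ x ∂μ, Tendsto (fun n => ((φ n).normed μ ⋆[lsmul ℝ ℝ, μ] w) x) atTop (𝓝 (w x)) :=
    ContDiffBump.ae_convolution_tendsto_right_of_locallyIntegrable hlim (K := 2)
      (Eventually.of_forall fun n => le_rfl) hw.locallyIntegrable
  have mollified (n : ℕ) : finrank ℝ E * μ B ^ (1 / finrank ℝ E : ℝ) *
      lorentzIntegral μ (1 - 1 / finrank ℝ E) ((φ n).normed μ ⋆[lsmul ℝ ℝ, μ] w)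
      ≤ ν Set.univ :=
    (_root_.anisotropic_sobolev μ hd
      ((φ n).hasCompactSupport_normed.contDiff_convolution_left _ (φ n).contDiff_normed
        hw.locallyIntegrable)
      ((φ n).hasCompactSupport_normed.convolution _ hwc) hB hB').trans
    (h.lintegral_fderivSup_convolution_le hw.locallyIntegrable (φ n).contDiff_normed
      (φ n).hasCompactSupport_normed (φ n).nonneg_normed (φ n).integral_normed)
  calc finrank ℝ E * μ B ^ (1 / finrank ℝ E : ℝ) * lorentzIntegral μ (1 - 1 / finrank ℝ E) w
      ≤ liminf (fun _ : ℕ => finrank ℝ E * μ B ^ (1 / finrank ℝ E : ℝ)) atTop *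
          liminf (fun n => lorentzIntegral μ (1 - 1 / finrank ℝ E)
            ((φ n).normed μ ⋆[lsmul ℝ ℝ, μ] w)) atTop := by
        rw [liminf_const]
        gcongr
        exact lorentzIntegral_le_liminf (Nat.one_sub_one_div_cast_nonneg _) hae
    _ ≤ _ := ENNReal.le_liminf_mul
    _ ≤ ν Set.univ :=
        liminf_le_of_frequently_le' (Eventually.of_forall mollified).frequently

theorem lintegral_enorm_le_lorentzIntegral_rpow {α F : Type*} [MeasurableSpace α]
    {μ : Measure α} [SFinite μ] [NormedAddCommGroup F] {p : ℝ} (hp : 0 < p) (hp1 : p ≤ 1)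
    {w : α → F} (hw : Measurable fun x => ‖w x‖ₑ) (hw1 : ∀ x, w x ≠ 0 → 1 ≤ ‖w x‖ₑ) :
    ∫⁻ x, ‖w x‖ₑ ∂μ ≤ lorentzIntegral μ p w ^ p⁻¹ := by
  set m : ℝ → ℝ≥0∞ := fun t => μ {x | ENNReal.ofReal t < ‖w x‖ₑ}
  have anti : Antitone m := antitone_measure_ofReal_lt μ fun x => ‖w x‖ₑ
  -- The level sets at heights in `[0, 1)` all coincide with the support of `w`.
  have low (t : ℝ) (ht : t ∈ Set.Ioo (0 : ℝ) 1) : m 0 ≤ m t := measure_mono fun x hx =>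
    (ENNReal.ofReal_lt_one.2 ht.2).trans_le (hw1 x fun h0 => by simp [h0] at hx)
  have support_le : m 0 ^ p ≤ lorentzIntegral μ p w :=
    calc m 0 ^ p = ∫⁻ _ in Set.Ioo (0 : ℝ) 1, m 0 ^ p := by simp
      _ ≤ ∫⁻ t in Set.Ioo (0 : ℝ) 1, m t ^ p := setLIntegral_mono' measurableSet_Ioo
          fun t ht => ENNReal.rpow_le_rpow (low t ht) hp.le
      _ ≤ lorentzIntegral μ p w := lintegral_mono_set Set.Ioo_subset_Ioi_self
  have level (t : ℝ) (ht : t ∈ Set.Ioi (0 : ℝ)) :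
      m t ≤ lorentzIntegral μ p w ^ ((1 - p) / p) * m t ^ p :=
    calc m t = m t ^ (1 - p) * m t ^ p := by
          rw [← ENNReal.rpow_add_of_nonneg _ _ (sub_nonneg.2 hp1) hp.le, sub_add_cancel,
            ENNReal.rpow_one]
      _ ≤ (m 0 ^ p) ^ ((1 - p) / p) * m t ^ p := by
          rw [← ENNReal.rpow_mul, mul_div_cancel₀ _ hp.ne']
          gcongr
          exact anti ht.le
      _ ≤ _ := by gcongr
  calc ∫⁻ x, ‖w x‖ₑ ∂μ = ∫⁻ t in Set.Ioi (0 : ℝ), m t :=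
        lintegral_eq_lintegral_meas_ofReal_lt μ hw
    _ ≤ ∫⁻ t in Set.Ioi (0 : ℝ), lorentzIntegral μ p w ^ ((1 - p) / p) * m t ^ p :=
        setLIntegral_mono' measurableSet_Ioi level
    _ = lorentzIntegral μ p w ^ ((1 - p) / p) * lorentzIntegral μ p w ^ (1 : ℝ) := by
        rw [lintegral_const_mul _ (anti.measurable.pow_const p), ENNReal.rpow_one, lorentzIntegral]
    _ = lorentzIntegral μ p w ^ p⁻¹ := by
        rw [← ENNReal.rpow_add_of_nonneg _ _ (div_nonneg (sub_nonneg.2 hp1) hp.le) one_pos.le]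
        congr 1
        field_simp
        ring

theorem HasVariationLE.isoperimetric [IsFiniteMeasureOnCompacts ν]
    (h : HasVariationLE μ B w ν) (hd : 1 < finrank ℝ E) (hw : Integrable w μ)
    (hwm : Measurable w) (hwc : HasCompactSupport w) (hw1 : ∀ x, w x ≠ 0 → 1 ≤ ‖w x‖ₑ)
    (hB : MeasurableSet B) (hB' : Bornology.IsBounded B) :
    finrank ℝ E * μ B ^ (1 / finrank ℝ E : ℝ) * (∫⁻ x, ‖w x‖ₑ ∂μ) ^ (1 - 1 / finrank ℝ E : ℝ)
      ≤ ν Set.univ := by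
  have : ProperSpace E := FiniteDimensional.proper ℝ E
  have hp : 0 < (1 - 1 / finrank ℝ E : ℝ) := by
    have : (1 : ℝ) < finrank ℝ E := by exact_mod_cast hd
    exact sub_pos.2 ((div_lt_one (by positivity)).2 this)
  refine le_trans ?_ (h.anisotropic_sobolev hd hw hwc hB hB')
  gcongr
  exact (ENNReal.le_rpow_inv_iff hp).1
    (lintegral_enorm_le_lorentzIntegral_rpow hp (sub_le_self _ (by positivity)) hwm.enorm hw1)

end Sobolev

/-! ### The area formula and the degree -/

section Degree

variable {E : Type*} [NormedAddCommGroup E] [NormedSpace ℝ E] {s : Set E}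

/-- The number of points of the fibre `f ⁻¹' {y}` in `s`, counted with the sign of the Jacobian
determinant; critical points are discarded, and an infinite fibre of either sign counts as `0`. -/
noncomputable def degreeOn (f : E → E) (s : Set E) (y : E) : ℤ :=
  (s ∩ {x | 0 < (fderiv ℝ f x).det} ∩ f ⁻¹' {y}).ncard -
    (s ∩ {x | (fderiv ℝ f x).det < 0} ∩ f ⁻¹' {y}).ncard

theorem degreeOn_eq_zero_of_notMem_image {f : E → E} {y : E} (hy : y ∉ f '' s) :
    degreeOn f s y = 0 := by
  have hempty (t : Set E) : s ∩ t ∩ f ⁻¹' {y} = ∅ :=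
    Set.eq_empty_of_forall_notMem fun x hx => hy ⟨x, hx.1.1, hx.2⟩
  simp only [degreeOn, hempty, Set.ncard_empty, sub_self]

variable [MeasurableSpace E] [BorelSpace E]

theorem measurable_det_fderiv {f : E → E} (hf : ContDiff ℝ 1 f) :
    Measurable fun x => (fderiv ℝ f x).det :=
  (ContinuousLinearMap.continuous_det.comp (hf.continuous_fderiv one_ne_zero)).measurable

variable [FiniteDimensional ℝ E]

theorem exists_partition_injOn_of_det_ne_zero {f : E → E} {f' : E → E →L[ℝ] E}
    (hf' : ∀ x ∈ s, HasFDerivWithinAt f (f' x) s x) (hdet : ∀ x ∈ s, (f' x).det ≠ 0) :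
    ∃ t : ℕ → Set E, Pairwise (Function.onFun Disjoint t) ∧ (∀ n, MeasurableSet (t n)) ∧
      s ⊆ ⋃ n, t n ∧ ∀ n, Set.InjOn f (s ∩ t n) := by
  have radius (A : E →L[ℝ] E) : ∃ r : ℝ≥0, r ≠ 0 ∧ ∀ h : A.det ≠ 0, Subsingleton E ∨
      r < ‖((A.toContinuousLinearEquivOfDetNeZero h).symm : E →L[ℝ] E)‖₊⁻¹ := by
    by_cases h : A.det ≠ 0
    · rcases (A.toContinuousLinearEquivOfDetNeZero h).subsingleton_or_nnnorm_symm_pos with hE | hA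
      · exact ⟨1, one_ne_zero, fun _ => Or.inl hE⟩
      · obtain ⟨r, hr, hrA⟩ := exists_between (inv_pos.2 hA)
        exact ⟨r, hr.ne', fun _ => Or.inr hrA⟩
    · exact ⟨1, one_ne_zero, fun h' => absurd h' h⟩
  choose r hr0 hr using radius
  obtain ⟨t, A, hdisj, ht, hst, happrox, hA⟩ :=
    exists_partition_approximatesLinearOn_of_hasFDerivWithinAt f s f' hf' r hr0
  refine ⟨t, hdisj, ht, hst, fun n => ?_⟩
  rcases s.eq_empty_or_nonempty with rfl | hs
  · simp
  obtain ⟨y, hy, hAy⟩ := hA hs n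
  have hAdet : (A n).det ≠ 0 := hAy ▸ hdet y hy
  exact ApproximatesLinearOn.injOn (f' := (A n).toContinuousLinearEquivOfDetNeZero hAdet)
    (happrox n) (hr (A n) hAdet)

theorem count_inter_fibre_eq_tsum_indicator {α β : Type*} [MeasurableSpace α]
    [MeasurableSingletonClass α] {f : α → β} {s : Set α} {t : ℕ → Set α}
    (hdisj : Pairwise (Function.onFun Disjoint t)) (hst : s ⊆ ⋃ n, t n)
    (hinj : ∀ n, Set.InjOn f (s ∩ t n)) (y : β) :
    Measure.count (s ∩ f ⁻¹' {y}) = ∑' n, (f '' (s ∩ t n)).indicator 1 y := by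
  have hsub (n : ℕ) : ((s ∩ t n) ∩ f ⁻¹' {y}).Subsingleton := fun a ha b hb =>
    hinj n ha.1 hb.1 (ha.2.trans hb.2.symm)
  have hunion : s ∩ f ⁻¹' {y} = ⋃ n, (s ∩ t n) ∩ f ⁻¹' {y} := by
    rw [← Set.iUnion_inter, ← Set.inter_iUnion, Set.inter_eq_left.2 hst]
  rw [hunion, measure_iUnion (fun i j hij => (hdisj hij).mono
    (Set.inter_subset_left.trans Set.inter_subset_right)
    (Set.inter_subset_left.trans Set.inter_subset_right)) fun n => (hsub n).measurableSet]
  congr 1 with n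
  rcases (hsub n).eq_empty_or_singleton with h | ⟨a, ha⟩
  · rw [h, measure_empty, Set.indicator_of_notMem]
    rintro ⟨a, ha, rfl⟩
    exact Set.notMem_empty a (h.subset (⟨ha, rfl⟩ : a ∈ s ∩ t n ∩ f ⁻¹' {f a}))
  · have ha' : a ∈ (s ∩ t n) ∩ f ⁻¹' {y} := ha ▸ rfl
    have hy : y ∈ f '' (s ∩ t n) := ⟨a, ha'.1, ha'.2⟩
    rw [ha, Measure.count_singleton, Set.indicator_of_mem hy, Pi.one_apply]

theorem measurable_count_inter_fibre {f : E → E} {f' : E → E →L[ℝ] E} (hs : MeasurableSet s)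
    (hf' : ∀ x ∈ s, HasFDerivWithinAt f (f' x) s x) (hdet : ∀ x ∈ s, (f' x).det ≠ 0) :
    Measurable fun y => Measure.count (s ∩ f ⁻¹' {y}) := by
  obtain ⟨t, hdisj, ht, hst, hinj⟩ := exists_partition_injOn_of_det_ne_zero hf' hdet
  simp only [count_inter_fibre_eq_tsum_indicator hdisj hst hinj]
  exact Measurable.tsum fun n => measurable_one.indicator <|
    measurable_image_of_fderivWithin (hs.inter (ht n))
      (fun x hx => (hf' x hx.1).mono Set.inter_subset_left) (hinj n)

variable (μ : Measure E) [μ.IsAddHaarMeasure]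

theorem lintegral_count_inter_fibre_mul {f : E → E} {f' : E → E →L[ℝ] E} (hs : MeasurableSet s)
    (hf' : ∀ x ∈ s, HasFDerivWithinAt f (f' x) s x) (hdet : ∀ x ∈ s, (f' x).det ≠ 0)
    {g : E → ℝ≥0∞} (hg : Measurable g) :
    ∫⁻ y, Measure.count (s ∩ f ⁻¹' {y}) * g y ∂μ
      = ∫⁻ x in s, ENNReal.ofReal |(f' x).det| * g (f x) ∂μ := by
  obtain ⟨t, hdisj, ht, hst, hinj⟩ := exists_partition_injOn_of_det_ne_zero hf' hdet
  have hst' : ⋃ n, s ∩ t n = s := by rw [← Set.inter_iUnion, Set.inter_eq_left.2 hst]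
  have hf'' (n : ℕ) : ∀ x ∈ s ∩ t n, HasFDerivWithinAt f (f' x) (s ∩ t n) x := fun x hx =>
    (hf' x hx.1).mono Set.inter_subset_left
  have himage (n : ℕ) : MeasurableSet (f '' (s ∩ t n)) :=
    measurable_image_of_fderivWithin (hs.inter (ht n)) (hf'' n) (hinj n)
  calc ∫⁻ y, Measure.count (s ∩ f ⁻¹' {y}) * g y ∂μ
      = ∫⁻ y, ∑' n, (f '' (s ∩ t n)).indicator g y ∂μ := by
        simp only [count_inter_fibre_eq_tsum_indicator hdisj hst hinj, ← ENNReal.tsum_mul_right,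
          ← Set.indicator_mul_left, Pi.one_apply, one_mul]
    _ = ∑' n, ∫⁻ y in f '' (s ∩ t n), g y ∂μ := by
        rw [lintegral_tsum fun n => (hg.indicator (himage n)).aemeasurable]
        simp only [lintegral_indicator (himage _)]
    _ = ∑' n, ∫⁻ x in s ∩ t n, ENNReal.ofReal |(f' x).det| * g (f x) ∂μ := by
        simp only [lintegral_image_eq_lintegral_abs_det_fderiv_mul μ (hs.inter (ht _)) (hf'' _)
          (hinj _)]
    _ = ∫⁻ x in s, ENNReal.ofReal |(f' x).det| * g (f x) ∂μ := by
        rw [← lintegral_iUnion (fun n => hs.inter (ht n)) fun i j hij =>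
          (hdisj hij).mono Set.inter_subset_right Set.inter_subset_right, hst']

theorem withDensity_count_inter_fibre {f : E → E} (hf : ContDiff ℝ 1 f) (hs : MeasurableSet s)
    (hdet : ∀ x ∈ s, (fderiv ℝ f x).det ≠ 0) :
    (μ.withDensity fun y => Measure.count (s ∩ f ⁻¹' {y}))
      = ((μ.restrict s).withDensity fun x => ENNReal.ofReal |(fderiv ℝ f x).det|).map f := by
  have hf' : ∀ x ∈ s, HasFDerivWithinAt f (fderiv ℝ f x) s x := fun x _ =>
    (hf.differentiable one_ne_zero x).hasFDerivAt.hasFDerivWithinAt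
  have hfm : Measurable f := hf.continuous.measurable
  ext A hA
  rw [withDensity_apply _ hA, Measure.map_apply hfm hA, withDensity_apply _ (hfm hA),
    ← lintegral_indicator hA, ← lintegral_indicator (hfm hA)]
  convert lintegral_count_inter_fibre_mul μ hs hf' hdet (measurable_one.indicator hA) using 2
  · ext y
    by_cases hy : y ∈ A <;> simp [hy]
  · ext x
    by_cases hx : f x ∈ A <;> simp [hx]

theorem toReal_count_eq_ncard {α : Type*} [MeasurableSpace α] [MeasurableSingletonClass α]
    (t : Set α) : (Measure.count t).toReal = t.ncard := by
  rcases t.finite_or_infinite with ht | ht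
  · rw [Measure.count_apply_finite t ht, Set.ncard_eq_toFinset_card t ht, ENNReal.toReal_natCast]
  · rw [Measure.count_apply_infinite ht, ht.ncard, ENNReal.toReal_top, Nat.cast_zero]

theorem lintegral_count_inter_fibre_ne_top {f : E → E} (hf : ContDiff ℝ 1 f)
    (hs : MeasurableSet s) (hdet : ∀ x ∈ s, (fderiv ℝ f x).det ≠ 0)
    (hint : IntegrableOn (fun x => (fderiv ℝ f x).det) s μ) :
    ∫⁻ y, Measure.count (s ∩ f ⁻¹' {y}) ∂μ ≠ ∞ := by
  have hf' : ∀ x ∈ s, HasFDerivWithinAt f (fderiv ℝ f x) s x := fun x _ =>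
    (hf.differentiable one_ne_zero x).hasFDerivAt.hasFDerivWithinAt
  have h := lintegral_count_inter_fibre_mul μ hs hf' hdet measurable_one
  simp only [Pi.one_apply, mul_one, ← Real.enorm_eq_ofReal_abs] at h
  exact h ▸ hint.2.ne

theorem integrable_ncard_inter_fibre {f : E → E} (hf : ContDiff ℝ 1 f)
    (hs : MeasurableSet s) (hdet : ∀ x ∈ s, (fderiv ℝ f x).det ≠ 0)
    (hint : IntegrableOn (fun x => (fderiv ℝ f x).det) s μ) :
    Integrable (fun y => ((s ∩ f ⁻¹' {y}).ncard : ℝ)) μ := by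
  simp only [← toReal_count_eq_ncard]
  exact integrable_toReal_of_lintegral_ne_top
    (measurable_count_inter_fibre hs (fun x _ =>
      (hf.differentiable one_ne_zero x).hasFDerivAt.hasFDerivWithinAt) hdet).aemeasurable
    (lintegral_count_inter_fibre_ne_top μ hf hs hdet hint)

theorem integral_ncard_inter_fibre_mul {f : E → E} (hf : ContDiff ℝ 1 f)
    (hs : MeasurableSet s) (hdet : ∀ x ∈ s, (fderiv ℝ f x).det ≠ 0)
    (hint : IntegrableOn (fun x => (fderiv ℝ f x).det) s μ) {g : E → ℝ} (hg : Measurable g) :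
    ∫ y, (s ∩ f ⁻¹' {y}).ncard * g y ∂μ = ∫ x in s, |(fderiv ℝ f x).det| * g (f x) ∂μ := by
  have hcount : Measurable fun y => Measure.count (s ∩ f ⁻¹' {y}) :=
    measurable_count_inter_fibre hs (fun x _ =>
      (hf.differentiable one_ne_zero x).hasFDerivAt.hasFDerivWithinAt) hdet
  have hfin : ∀ᵐ y ∂μ, Measure.count (s ∩ f ⁻¹' {y}) < ∞ :=
    ae_lt_top hcount (lintegral_count_inter_fibre_ne_top μ hf hs hdet hint)
  calc ∫ y, (s ∩ f ⁻¹' {y}).ncard * g y ∂μ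
      = ∫ y, g y ∂(μ.withDensity fun y => Measure.count (s ∩ f ⁻¹' {y})) := by
        rw [integral_withDensity_eq_integral_toReal_smul hcount hfin]
        simp only [toReal_count_eq_ncard, smul_eq_mul]
    _ = ∫ x, g (f x) ∂((μ.restrict s).withDensity
          fun x => ENNReal.ofReal |(fderiv ℝ f x).det|) := by
        rw [withDensity_count_inter_fibre μ hf hs hdet,
          integral_map hf.continuous.measurable.aemeasurable hg.aestronglyMeasurable]
    _ = ∫ x in s, |(fderiv ℝ f x).det| * g (f x) ∂μ := by
        rw [integral_withDensity_eq_integral_toReal_smul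
          (measurable_det_fderiv hf).abs.ennreal_ofReal
          (ae_of_all _ fun _ => ENNReal.ofReal_lt_top)]
        simp only [ENNReal.toReal_ofReal (abs_nonneg _), smul_eq_mul]

theorem measurable_degreeOn {f : E → E} (hf : ContDiff ℝ 1 f) (hs : MeasurableSet s) :
    Measurable fun y => (degreeOn f s y : ℝ) := by
  have hncard {t : Set E} (ht : MeasurableSet t) (hdet : ∀ x ∈ t, (fderiv ℝ f x).det ≠ 0) :
      Measurable fun y => ((t ∩ f ⁻¹' {y}).ncard : ℝ) := by
    simp only [← toReal_count_eq_ncard]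
    exact (measurable_count_inter_fibre ht (fun x _ =>
      (hf.differentiable one_ne_zero x).hasFDerivAt.hasFDerivWithinAt) hdet).ennreal_toReal
  simp only [degreeOn, Int.cast_sub, Int.cast_natCast]
  exact (hncard (hs.inter (measurableSet_lt measurable_const (measurable_det_fderiv hf)))
    fun x hx => hx.2.ne').sub
    (hncard (hs.inter (measurableSet_lt (measurable_det_fderiv hf) measurable_const))
      fun x hx => hx.2.ne)

theorem integrable_degreeOn {f : E → E} (hf : ContDiff ℝ 1 f) (hs : MeasurableSet s)
    (hint : IntegrableOn (fun x => (fderiv ℝ f x).det) s μ) :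
    Integrable (fun y => (degreeOn f s y : ℝ)) μ := by
  simp only [degreeOn, Int.cast_sub, Int.cast_natCast]
  exact (integrable_ncard_inter_fibre μ hf
    (hs.inter (measurableSet_lt measurable_const (measurable_det_fderiv hf)))
    (fun x hx => hx.2.ne') (hint.mono_set Set.inter_subset_left)).sub
    (integrable_ncard_inter_fibre μ hf
      (hs.inter (measurableSet_lt (measurable_det_fderiv hf) measurable_const))
      (fun x hx => hx.2.ne) (hint.mono_set Set.inter_subset_left))

theorem integral_degreeOn_mul {f : E → E} (hf : ContDiff ℝ 1 f) (hs : MeasurableSet s)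
    (hint : IntegrableOn (fun x => (fderiv ℝ f x).det) s μ) {g : E → ℝ} (hg : Measurable g)
    {M : ℝ} (hM : ∀ y, |g y| ≤ M) :
    ∫ y, degreeOn f s y * g y ∂μ = ∫ x in s, (fderiv ℝ f x).det * g (f x) ∂μ := by
  set J : E → ℝ := fun x => (fderiv ℝ f x).det
  have hpos : MeasurableSet {x | 0 < J x} :=
    measurableSet_lt measurable_const (measurable_det_fderiv hf)
  have hneg : MeasurableSet {x | J x < 0} :=
    measurableSet_lt (measurable_det_fderiv hf) measurable_const
  have hbdd {w : E → ℝ} (hw : Integrable w μ) : Integrable (fun y => w y * g y) μ :=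
    hw.mul_bdd (c := M) hg.aestronglyMeasurable (ae_of_all _ hM)
  have habs : IntegrableOn (fun x => |J x| * g (f x)) s μ :=
    hint.abs.mul_bdd (c := M) (hg.comp hf.continuous.measurable).aestronglyMeasurable
      (ae_of_all _ fun x => hM (f x))
  simp only [degreeOn, Int.cast_sub, Int.cast_natCast, sub_mul]
  rw [integral_sub
      (hbdd <| integrable_ncard_inter_fibre μ hf (hs.inter hpos) (fun x hx => hx.2.ne')
        (hint.mono_set Set.inter_subset_left))
      (hbdd <| integrable_ncard_inter_fibre μ hf (hs.inter hneg) (fun x hx => hx.2.ne)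
        (hint.mono_set Set.inter_subset_left)),
    integral_ncard_inter_fibre_mul μ hf (hs.inter hpos) (fun x hx => hx.2.ne')
      (hint.mono_set Set.inter_subset_left) hg,
    integral_ncard_inter_fibre_mul μ hf (hs.inter hneg) (fun x hx => hx.2.ne)
      (hint.mono_set Set.inter_subset_left) hg,
    ← setIntegral_indicator hpos, ← setIntegral_indicator hneg,
    ← integral_sub (habs.indicator hpos) (habs.indicator hneg)]
  refine integral_congr_ae (ae_of_all _ fun x => ?_)
  change _ = J x * g (f x)
  rcases lt_trichotomy (J x) 0 with h | h | h
  · simp [Set.indicator, h, h.not_gt, abs_of_neg h]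
  · simp [Set.indicator, h]
  · simp [Set.indicator, h, h.not_gt, abs_of_pos h]

end Degree

/-! ### Stokes' theorem for the cone over a surface -/

section TripleProduct

theorem tripleProduct_smul_eq {R : Type*} [CommRing R] (a b c d : Fin 3 → R) :
    (a ⬝ᵥ b ⨯₃ c) • d
      = (d ⬝ᵥ b ⨯₃ c) • a + (a ⬝ᵥ d ⨯₃ c) • b + (a ⬝ᵥ b ⨯₃ d) • c := by
  ext i
  fin_cases i <;> simp [cross_apply, dotProduct, Fin.sum_univ_three] <;> ring

variable {E : Type*} [NormedAddCommGroup E] [NormedSpace ℝ E] {f g h : E → Fin 3 → ℝ}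

theorem contDiff_tripleProduct {n : WithTop ℕ∞} (hf : ContDiff ℝ n f) (hg : ContDiff ℝ n g)
    (hh : ContDiff ℝ n h) : ContDiff ℝ n fun x => f x ⬝ᵥ g x ⨯₃ h x := by
  simp only [dotProduct, cross_apply, Fin.sum_univ_three, Matrix.cons_val]
  fun_prop

theorem fderiv_tripleProduct_apply {x : E} (hf : DifferentiableAt ℝ f x)
    (hg : DifferentiableAt ℝ g x) (hh : DifferentiableAt ℝ h x) (v : E) :
    fderiv ℝ (fun y => f y ⬝ᵥ g y ⨯₃ h y) x v = fderiv ℝ f x v ⬝ᵥ g x ⨯₃ h x +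
      f x ⬝ᵥ fderiv ℝ g x v ⨯₃ h x + f x ⬝ᵥ g x ⨯₃ fderiv ℝ h x v := by
  have hcross := (crossProduct (R := ℝ)).toContinuousBilinearMap.hasFDerivAt_of_bilinear
    hg.hasFDerivAt hh.hasFDerivAt
  have hdot := (dotProductBilin ℝ ℝ (m := Fin 3)).toContinuousBilinearMap.hasFDerivAt_of_bilinear
    hf.hasFDerivAt hcross
  refine (DFunLike.congr_fun hdot.fderiv v).trans ?_
  simp only [ContinuousLinearMap.precompR_apply, ContinuousLinearMap.compL_apply,
    ContinuousLinearMap.comp_add, LinearMap.toContinuousBilinearMap_apply, add_apply,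
    ContinuousLinearMap.comp_apply, dotProductBilin_apply_apply,
    ContinuousLinearMap.precompL_apply]
  ring

end TripleProduct

section Surface

variable {u : ℝ × ℝ → Fin 3 → ℝ}

/-- The area vector `u_x ∧ u_y` of a parametrised surface, normal to the surface and with the
area element as Euclidean length. -/
noncomputable def areaVector (u : ℝ × ℝ → Fin 3 → ℝ) (p : ℝ × ℝ) : Fin 3 → ℝ :=
  pderivX u p ⨯₃ pderivY u p

theorem contDiff_pderivX (hu : ContDiff ℝ 2 u) : ContDiff ℝ 1 (pderivX u) :=
  (hu.fderiv_right le_rfl).clm_apply contDiff_const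

theorem contDiff_pderivY (hu : ContDiff ℝ 2 u) : ContDiff ℝ 1 (pderivY u) :=
  (hu.fderiv_right le_rfl).clm_apply contDiff_const

theorem fderiv_pderivX_eq_fderiv_pderivY (hu : ContDiff ℝ 2 u) (p : ℝ × ℝ) :
    fderiv ℝ (pderivX u) p (0, 1) = fderiv ℝ (pderivY u) p (1, 0) := by
  have hd : DifferentiableAt ℝ (fderiv ℝ u) p :=
    (hu.fderiv_right le_rfl).differentiable one_ne_zero p
  have hsymm : IsSymmSndFDerivAt ℝ u p := hu.contDiffAt.isSymmSndFDerivAt (by simp)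
  have key : fderiv ℝ (fun p => fderiv ℝ u p (1, 0)) p (0, 1)
      = fderiv ℝ (fun p => fderiv ℝ u p (0, 1)) p (1, 0) := by
    rw [fderiv_clm_apply hd (differentiableAt_const _),
      fderiv_clm_apply hd (differentiableAt_const _)]
    simpa using hsymm (0, 1) (1, 0)
  exact key

theorem pderivX_eq_zero_of_notMem_tsupport {p : ℝ × ℝ} (hp : p ∉ tsupport u) :
    pderivX u p = 0 := by
  rw [pderivX, fderiv_of_notMem_tsupport ℝ hp, zero_apply]

theorem pderivY_eq_zero_of_notMem_tsupport {p : ℝ × ℝ} (hp : p ∉ tsupport u) :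
    pderivY u p = 0 := by
  rw [pderivY, fderiv_of_notMem_tsupport ℝ hp, zero_apply]

theorem areaVector_eq_zero_of_notMem_tsupport {p : ℝ × ℝ} (hp : p ∉ tsupport u) :
    areaVector u p = 0 := by
  rw [areaVector, pderivX_eq_zero_of_notMem_tsupport hp, map_zero, LinearMap.zero_apply]

theorem continuous_areaVector (hu : ContDiff ℝ 1 u) : Continuous (areaVector u) := by
  have hX : Continuous (pderivX u) := (hu.continuous_fderiv one_ne_zero).clm_apply continuous_const
  have hY : Continuous (pderivY u) := (hu.continuous_fderiv one_ne_zero).clm_apply continuous_const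
  exact (crossProduct (R := ℝ)).toContinuousBilinearMap.continuous₂.comp (hX.prodMk hY)

theorem fderiv_flux_eq (hu : ContDiff ℝ 2 u) {k : ℝ × ℝ → ℝ} (hk : ContDiff ℝ 1 k)
    (b : Fin 3 → ℝ) (p : ℝ × ℝ) :
    fderiv ℝ (fun q => k q * (u q ⬝ᵥ b ⨯₃ pderivY u q)) p (1, 0) +
        fderiv ℝ (fun q => k q * (u q ⬝ᵥ pderivX u q ⨯₃ b)) p (0, 1)
      = fderiv ℝ k p (1, 0) * (u p ⬝ᵥ b ⨯₃ pderivY u p) +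
        fderiv ℝ k p (0, 1) * (u p ⬝ᵥ pderivX u p ⨯₃ b) - 2 * (k p * (b ⬝ᵥ areaVector u p)) := by
  have du : DifferentiableAt ℝ u p := hu.differentiable two_ne_zero p
  have dX : DifferentiableAt ℝ (pderivX u) p := (contDiff_pderivX hu).differentiable one_ne_zero p
  have dY : DifferentiableAt ℝ (pderivY u) p := (contDiff_pderivY hu).differentiable one_ne_zero p
  have dk : DifferentiableAt ℝ k p := hk.differentiable one_ne_zero p
  have db : DifferentiableAt ℝ (fun _ : ℝ × ℝ => b) p := differentiableAt_const b
  have hX : DifferentiableAt ℝ (fun q => u q ⬝ᵥ b ⨯₃ pderivY u q) p :=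
    (contDiff_tripleProduct (hu.of_le one_le_two) contDiff_const
      (contDiff_pderivY hu)).differentiable one_ne_zero p
  have hY : DifferentiableAt ℝ (fun q => u q ⬝ᵥ pderivX u q ⨯₃ b) p :=
    (contDiff_tripleProduct (hu.of_le one_le_two) (contDiff_pderivX hu)
      contDiff_const).differentiable one_ne_zero p
  have ux : fderiv ℝ u p (1, 0) = pderivX u p := rfl
  have uy : fderiv ℝ u p (0, 1) = pderivY u p := rfl
  have swapX : pderivX u p ⬝ᵥ b ⨯₃ pderivY u p = -(b ⬝ᵥ areaVector u p) := by
    rw [areaVector, triple_product_permutation, ← cross_anticomm, dotProduct_neg]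
  have swapY : pderivY u p ⬝ᵥ pderivX u p ⨯₃ b = -(b ⬝ᵥ areaVector u p) := by
    rw [areaVector, triple_product_permutation, triple_product_permutation, ← cross_anticomm,
      dotProduct_neg]
  have cancel : u p ⬝ᵥ b ⨯₃ fderiv ℝ (pderivY u) p (1, 0)
      = -(u p ⬝ᵥ fderiv ℝ (pderivX u) p (0, 1) ⨯₃ b) := by
    rw [fderiv_pderivX_eq_fderiv_pderivY hu, ← cross_anticomm, dotProduct_neg]
  simp only [fderiv_fun_mul dk hX, fderiv_fun_mul dk hY, add_apply, smul_apply,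
    fderiv_tripleProduct_apply du db dY, fderiv_tripleProduct_apply du dX db, ux, uy,
    fderiv_fun_const, Pi.zero_apply, zero_apply, map_zero, LinearMap.zero_apply, dotProduct_zero,
    smul_eq_mul, swapX, swapY, cancel]
  ring

section

variable {E : Type*} [NormedAddCommGroup E] [NormedSpace ℝ E] [MeasurableSpace E] [BorelSpace E]
  (μ : Measure E) {f : E → ℝ}

theorem integrable_fderiv_apply [IsFiniteMeasureOnCompacts μ] (hf : ContDiff ℝ 1 f)
    (hc : HasCompactSupport f) (v : E) : Integrable (fun x => fderiv ℝ f x v) μ :=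
  ((hf.continuous_fderiv one_ne_zero).clm_apply continuous_const).integrable_of_hasCompactSupport
    (hc.fderiv_apply ℝ v)

theorem integral_fderiv_apply_eq_zero [FiniteDimensional ℝ E] [μ.IsAddHaarMeasure]
    (hf : ContDiff ℝ 1 f) (hc : HasCompactSupport f) (v : E) : ∫ x, fderiv ℝ f x v ∂μ = 0 := by
  simpa using integral_mul_fderiv_eq_neg_fderiv_mul_of_integrable (μ := μ) (v := v)
    (f := fun _ : E => (1 : ℝ)) (g := f) (by simp)
    (by simpa using integrable_fderiv_apply μ hf hc v)
    (by simpa using hf.continuous.integrable_of_hasCompactSupport hc)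
    (fun x _ => differentiableAt_const 1) fun x _ => hf.differentiable one_ne_zero x

end

theorem integrable_mul_dotProduct_areaVector (hu : ContDiff ℝ 1 u) (hc : HasCompactSupport u)
    {k : ℝ × ℝ → ℝ} (hk : Continuous k) {v : ℝ × ℝ → Fin 3 → ℝ} (hv : Continuous v) :
    Integrable fun p => k p * (v p ⬝ᵥ areaVector u p) :=
  (hk.mul (hv.dotProduct (continuous_areaVector hu))).integrable_of_hasCompactSupport <|
    HasCompactSupport.intro hc fun p hp => by
      change k p * (v p ⬝ᵥ areaVector u p) = 0
      rw [areaVector_eq_zero_of_notMem_tsupport hp, dotProduct_zero, mul_zero]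

theorem integral_fderiv_mul_tripleProduct_add (hu : ContDiff ℝ 2 u) (hc : HasCompactSupport u)
    {k : ℝ × ℝ → ℝ} (hk : ContDiff ℝ 1 k) (b : Fin 3 → ℝ) :
    ∫ p, (fderiv ℝ k p (1, 0) * (u p ⬝ᵥ b ⨯₃ pderivY u p) +
        fderiv ℝ k p (0, 1) * (u p ⬝ᵥ pderivX u p ⨯₃ b))
      = 2 * ∫ p, k p * (b ⬝ᵥ areaVector u p) := by
  have hX : ContDiff ℝ 1 fun q => k q * (u q ⬝ᵥ b ⨯₃ pderivY u q) :=
    hk.mul (contDiff_tripleProduct (hu.of_le one_le_two) contDiff_const (contDiff_pderivY hu))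
  have hY : ContDiff ℝ 1 fun q => k q * (u q ⬝ᵥ pderivX u q ⨯₃ b) :=
    hk.mul (contDiff_tripleProduct (hu.of_le one_le_two) (contDiff_pderivX hu) contDiff_const)
  have cX : HasCompactSupport fun q => k q * (u q ⬝ᵥ b ⨯₃ pderivY u q) :=
    HasCompactSupport.intro hc fun q hq => by
      rw [image_eq_zero_of_notMem_tsupport hq, zero_dotProduct, mul_zero]
  have cY : HasCompactSupport fun q => k q * (u q ⬝ᵥ pderivX u q ⨯₃ b) :=
    HasCompactSupport.intro hc fun q hq => by
      rw [image_eq_zero_of_notMem_tsupport hq, zero_dotProduct, mul_zero]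
  have iX := integrable_fderiv_apply volume hX cX (1, 0)
  have iY := integrable_fderiv_apply volume hY cY (0, 1)
  have iA : Integrable fun p => 2 * (k p * (b ⬝ᵥ areaVector u p)) :=
    (integrable_mul_dotProduct_areaVector (hu.of_le one_le_two) hc hk.continuous
      continuous_const).const_mul 2
  have pointwise (p : ℝ × ℝ) := sub_eq_iff_eq_add.1 (fderiv_flux_eq hu hk b p).symm
  simp only [pointwise]
  rw [integral_add (iX.fun_add iY) iA, integral_add iX iY, integral_fderiv_apply_eq_zero _ hX cX,
    integral_fderiv_apply_eq_zero _ hY cY, integral_const_mul, add_zero, zero_add]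

section Cone

variable {ψ : (Fin 3 → ℝ) → ℝ}

theorem sq_mul_fderiv_comp_smul_mul_sub (hu : Differentiable ℝ u) (hψ : Differentiable ℝ ψ)
    (b : Fin 3 → ℝ) (t : ℝ) (p : ℝ × ℝ) :
    t ^ 2 * fderiv ℝ ψ (t • u p) b * (u p ⬝ᵥ areaVector u p) -
        t ^ 2 * fderiv ℝ ψ (t • u p) (u p) * (b ⬝ᵥ areaVector u p)
      = t * (fderiv ℝ (fun q => ψ (t • u q)) p (1, 0) * (u p ⬝ᵥ b ⨯₃ pderivY u p) +
          fderiv ℝ (fun q => ψ (t • u q)) p (0, 1) * (u p ⬝ᵥ pderivX u p ⨯₃ b)) := by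
  have chain (v : ℝ × ℝ) : fderiv ℝ (fun q => ψ (t • u q)) p v
      = t * fderiv ℝ ψ (t • u p) (fderiv ℝ u p v) := by
    have hd : HasFDerivAt (fun q => ψ (t • u q))
        ((fderiv ℝ ψ (t • u p)).comp (t • fderiv ℝ u p)) p :=
      (hψ _).hasFDerivAt.comp p ((hu p).hasFDerivAt.const_smul t)
    rw [hd.fderiv, ContinuousLinearMap.comp_apply, smul_apply, map_smul, smul_eq_mul]
  have cramer := congrArg (fderiv ℝ ψ (t • u p))
    (tripleProduct_smul_eq (u p) (pderivX u p) (pderivY u p) b)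
  simp only [map_add, map_smul, smul_eq_mul] at cramer
  rw [chain, chain, ← pderivX, ← pderivY, areaVector]
  linear_combination t ^ 2 * cramer

theorem integral_sq_mul_fderiv_comp_smul (hu : ContDiff ℝ 2 u) (hc : HasCompactSupport u)
    (hψ : ContDiff ℝ 1 ψ) (b : Fin 3 → ℝ) (t : ℝ) :
    ∫ p, t ^ 2 * fderiv ℝ ψ (t • u p) b * (u p ⬝ᵥ areaVector u p)
      = ∫ p, (2 * t * ψ (t • u p) + t ^ 2 * fderiv ℝ ψ (t • u p) (u p)) *
          (b ⬝ᵥ areaVector u p) := by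
  have hu1 : ContDiff ℝ 1 u := hu.of_le one_le_two
  have hk : ContDiff ℝ 1 fun p => ψ (t • u p) := hψ.comp (hu1.const_smul t)
  have cψ : Continuous fun p => fderiv ℝ ψ (t • u p) :=
    (hψ.continuous_fderiv one_ne_zero).comp (hu.continuous.const_smul t)
  have iu : Integrable fun p => t ^ 2 * fderiv ℝ ψ (t • u p) b * (u p ⬝ᵥ areaVector u p) :=
    integrable_mul_dotProduct_areaVector hu1 hc (by fun_prop) hu.continuous
  have ib : Integrable fun p => t ^ 2 * fderiv ℝ ψ (t • u p) (u p) * (b ⬝ᵥ areaVector u p) :=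
    integrable_mul_dotProduct_areaVector hu1 hc
      (continuous_const.mul (cψ.clm_apply hu.continuous)) continuous_const
  have iψ : Integrable fun p => 2 * t * (ψ (t • u p) * (b ⬝ᵥ areaVector u p)) :=
    (integrable_mul_dotProduct_areaVector hu1 hc hk.continuous continuous_const).const_mul _
  simp only [add_mul, mul_assoc (2 * t)]
  rw [integral_add iψ ib, ← sub_eq_iff_eq_add, ← integral_sub iu ib]
  simp only [sq_mul_fderiv_comp_smul_mul_sub (hu.differentiable two_ne_zero)
    (hψ.differentiable one_ne_zero)]
  rw [integral_const_mul, integral_const_mul, integral_fderiv_mul_tripleProduct_add hu hc hk b]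
  ring

theorem integral_fderiv_sq_mul_comp_smul (hψ : ContDiff ℝ 1 ψ) (v : Fin 3 → ℝ) :
    ∫ t in (0 : ℝ)..1, (2 * t * ψ (t • v) + t ^ 2 * fderiv ℝ ψ (t • v) v) = ψ v := by
  have hderiv (t : ℝ) : HasDerivAt (fun t : ℝ => t ^ 2 * ψ (t • v))
      (2 * t * ψ (t • v) + t ^ 2 * fderiv ℝ ψ (t • v) v) t := by
    have hline : HasDerivAt (fun t : ℝ => t • v) v t := by
      simpa using (hasDerivAt_id t).smul_const v
    simpa using (hasDerivAt_pow 2 t).fun_mul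
      ((hψ.differentiable one_ne_zero (t • v)).hasFDerivAt.comp_hasDerivAt t hline)
  have hψ' : Continuous fun t : ℝ => fderiv ℝ ψ (t • v) :=
    (hψ.continuous_fderiv one_ne_zero).comp (by fun_prop)
  rw [intervalIntegral.integral_eq_sub_of_hasDerivAt (fun t _ => hderiv t)]
  · simp
  · have hψt : Continuous fun t : ℝ => 2 * t * ψ (t • v) := by fun_prop
    exact (hψt.add ((continuous_pow 2).mul (hψ'.clm_apply continuous_const))).intervalIntegrable 0 1

theorem integrableOn_Ioc_prod_mul_dotProduct_areaVector (hu : ContDiff ℝ 1 u)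
    (hc : HasCompactSupport u) {k : ℝ × (ℝ × ℝ) → ℝ} (hk : Continuous k)
    {v : ℝ × ℝ → Fin 3 → ℝ} (hv : Continuous v) :
    IntegrableOn (fun z : ℝ × (ℝ × ℝ) => k z * (v z.2 ⬝ᵥ areaVector u z.2))
      (Set.Ioc 0 1 ×ˢ Set.univ) := by
  have hcont : Continuous fun z : ℝ × (ℝ × ℝ) => k z * (v z.2 ⬝ᵥ areaVector u z.2) :=
    hk.mul ((hv.comp continuous_snd).dotProduct ((continuous_areaVector hu).comp continuous_snd))
  have hcompact : IntegrableOn _ (Set.Icc (0 : ℝ) 1 ×ˢ tsupport u) :=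
    hcont.continuousOn.integrableOn_compact (isCompact_Icc.prod hc)
  refine (hcompact.of_forall_sdiff_eq_zero (measurableSet_Icc.prod MeasurableSet.univ) ?_).mono_set
    (Set.prod_mono Set.Ioc_subset_Icc_self subset_rfl)
  rintro ⟨t, p⟩ ⟨⟨ht, -⟩, hn⟩
  have hp : p ∉ tsupport u := fun hp => hn ⟨ht, hp⟩
  change k (t, p) * (v p ⬝ᵥ areaVector u p) = 0
  rw [areaVector_eq_zero_of_notMem_tsupport hp, dotProduct_zero, mul_zero]

/- Stokes' theorem on the cone over `u` for the 2-form `ψ ι_b vol`, whose differential is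
`∂_b ψ vol`. -/
theorem integral_cone_fderiv (hu : ContDiff ℝ 2 u) (hc : HasCompactSupport u)
    (hψ : ContDiff ℝ 1 ψ) (b : Fin 3 → ℝ) :
    ∫ z in Set.Ioc (0 : ℝ) 1 ×ˢ (Set.univ : Set (ℝ × ℝ)),
        z.1 ^ 2 * fderiv ℝ ψ (z.1 • u z.2) b * (u z.2 ⬝ᵥ areaVector u z.2)
      = ∫ p, ψ (u p) * (b ⬝ᵥ areaVector u p) := by
  have hu1 : ContDiff ℝ 1 u := hu.of_le one_le_two
  have cu : Continuous u := hu.continuous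
  have cψ : Continuous fun z : ℝ × (ℝ × ℝ) => fderiv ℝ ψ (z.1 • u z.2) :=
    (hψ.continuous_fderiv one_ne_zero).comp (by fun_prop)
  have iu := integrableOn_Ioc_prod_mul_dotProduct_areaVector hu1 hc
    (k := fun z => z.1 ^ 2 * fderiv ℝ ψ (z.1 • u z.2) b)
    ((continuous_fst.pow 2).mul (cψ.clm_apply continuous_const)) cu
  have ib := integrableOn_Ioc_prod_mul_dotProduct_areaVector hu1 hc
    (k := fun z => 2 * z.1 * ψ (z.1 • u z.2) + z.1 ^ 2 * fderiv ℝ ψ (z.1 • u z.2) (u z.2))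
    (by fun_prop) (continuous_const (y := b))
  rw [IntegrableOn, Measure.volume_eq_prod, ← Measure.prod_restrict, Measure.restrict_univ]
    at iu ib
  rw [Measure.volume_eq_prod, ← Measure.prod_restrict, Measure.restrict_univ, integral_prod _ iu]
  simp only [integral_sq_mul_fderiv_comp_smul hu hc hψ b]
  rw [integral_integral_swap ib]
  simp only [← intervalIntegral.integral_of_le zero_le_one, intervalIntegral.integral_mul_const,
    integral_fderiv_sq_mul_comp_smul hψ]

end Cone

end Surface

section ConeDegree

variable {u : ℝ × ℝ → Fin 3 → ℝ}

/-- The cone with apex `0` over the surface `u`, parametrised by the height `z 0` and the point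
`(z 1, z 2)` of the surface. -/
def coneMap (u : ℝ × ℝ → Fin 3 → ℝ) (z : Fin 3 → ℝ) : Fin 3 → ℝ :=
  z 0 • u (z 1, z 2)

theorem contDiff_coneMap {n : WithTop ℕ∞} (hu : ContDiff ℝ n u) : ContDiff ℝ n (coneMap u) :=
  (contDiff_apply ℝ ℝ 0).smul (hu.comp ((contDiff_apply ℝ ℝ 1).prodMk (contDiff_apply ℝ ℝ 2)))

theorem fderiv_coneMap_apply (hu : Differentiable ℝ u) (z v : Fin 3 → ℝ) :
    fderiv ℝ (coneMap u) z v = v 0 • u (z 1, z 2) +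
      z 0 • (v 1 • pderivX u (z 1, z 2) + v 2 • pderivY u (z 1, z 2)) := by
  have hproj (i : Fin 3) : HasFDerivAt (fun z : Fin 3 → ℝ => z i)
      (ContinuousLinearMap.proj (R := ℝ) (φ := fun _ : Fin 3 => ℝ) i) z :=
    (ContinuousLinearMap.proj (R := ℝ) (φ := fun _ : Fin 3 => ℝ) i).hasFDerivAt
  have hbase := (hu (z 1, z 2)).hasFDerivAt.comp z ((hproj 1).prodMk (hproj 2))
  have hcone : HasFDerivAt (coneMap u) _ z := (hproj 0).fun_smul hbase
  rw [hcone.fderiv]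
  simp [pderivX, pderivY, ← map_smul, ← map_add, add_comm]

theorem det_fderiv_coneMap (hu : Differentiable ℝ u) (z : Fin 3 → ℝ) :
    (fderiv ℝ (coneMap u) z).det
      = z 0 ^ 2 * (u (z 1, z 2) ⬝ᵥ areaVector u (z 1, z 2)) := by
  rw [ContinuousLinearMap.det, ← LinearMap.det_toMatrix', Matrix.det_fin_three, areaVector]
  simp [LinearMap.toMatrix'_apply, fderiv_coneMap_apply hu, dotProduct, cross_apply,
    Fin.sum_univ_three]
  ring

/-- The degree of the cone over the surface `u`: the number of times the cone covers a point,
counted with orientation. -/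
noncomputable def coneDegree (u : ℝ × ℝ → Fin 3 → ℝ) : (Fin 3 → ℝ) → ℤ :=
  degreeOn (coneMap u) {z | z 0 ∈ Set.Ioc 0 1}

/-- The splitting of `ℝ³` into the height and the surface parameters of `coneMap`. -/
def heightEquiv : (Fin 3 → ℝ) ≃ᵐ ℝ × (ℝ × ℝ) :=
  (MeasurableEquiv.piFinSuccAbove (fun _ : Fin 3 => ℝ) 0).trans
    ((MeasurableEquiv.refl ℝ).prodCongr MeasurableEquiv.finTwoArrow)

theorem heightEquiv_apply (z : Fin 3 → ℝ) : heightEquiv z = (z 0, (z 1, z 2)) := rfl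

theorem measurePreserving_heightEquiv : MeasurePreserving heightEquiv :=
  ((MeasurePreserving.id (volume : Measure ℝ)).prod (volume_preserving_finTwoArrow ℝ)).comp
    (volume_preserving_piFinSuccAbove (fun _ : Fin 3 => ℝ) 0)

theorem preimage_heightEquiv (s : Set ℝ) :
    heightEquiv ⁻¹' (s ×ˢ Set.univ) = {z : Fin 3 → ℝ | z 0 ∈ s} :=
  Set.ext fun _ => and_iff_left (Set.mem_univ _)

theorem setIntegral_height_mem (s : Set ℝ) (F : ℝ × (ℝ × ℝ) → ℝ) :
    ∫ z in {z : Fin 3 → ℝ | z 0 ∈ s}, F (z 0, (z 1, z 2)) = ∫ z in s ×ˢ Set.univ, F z := by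
  rw [← measurePreserving_heightEquiv.setIntegral_preimage_emb heightEquiv.measurableEmbedding,
    preimage_heightEquiv]
  simp only [heightEquiv_apply]

theorem measurableSet_height_mem_Ioc : MeasurableSet {z : Fin 3 → ℝ | z 0 ∈ Set.Ioc (0 : ℝ) 1} :=
  measurable_pi_apply 0 measurableSet_Ioc

theorem integrableOn_det_fderiv_coneMap (hu : ContDiff ℝ 1 u) (hc : HasCompactSupport u) :
    IntegrableOn (fun z => (fderiv ℝ (coneMap u) z).det) {z | z 0 ∈ Set.Ioc 0 1} := by
  have hcomp := (measurePreserving_heightEquiv.integrableOn_comp_preimage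
    heightEquiv.measurableEmbedding).2 (integrableOn_Ioc_prod_mul_dotProduct_areaVector hu hc
      (k := fun z => z.1 ^ 2) (by fun_prop) hu.continuous)
  rw [preimage_heightEquiv] at hcomp
  simp only [det_fderiv_coneMap (hu.differentiable one_ne_zero)]
  exact hcomp

theorem integral_coneDegree_mul (hu : ContDiff ℝ 1 u) (hc : HasCompactSupport u)
    {g : (Fin 3 → ℝ) → ℝ} (hg : Measurable g) {M : ℝ} (hM : ∀ x, |g x| ≤ M) :
    ∫ x, coneDegree u x * g x = ∫ z in Set.Ioc (0 : ℝ) 1 ×ˢ (Set.univ : Set (ℝ × ℝ)),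
      z.1 ^ 2 * g (z.1 • u z.2) * (u z.2 ⬝ᵥ areaVector u z.2) := by
  simp only [coneDegree]
  rw [integral_degreeOn_mul volume (contDiff_coneMap hu) measurableSet_height_mem_Ioc
    (integrableOn_det_fderiv_coneMap hu hc) hg hM, ← setIntegral_height_mem]
  simp only [det_fderiv_coneMap (hu.differentiable one_ne_zero), coneMap, mul_right_comm]

theorem integral_coneDegree (hu : ContDiff ℝ 1 u) (hc : HasCompactSupport u) :
    ∫ x, (coneDegree u x : ℝ) = (∫ p, u p ⬝ᵥ areaVector u p) / 3 := by
  have h := integral_coneDegree_mul hu hc (g := fun _ => 1) measurable_const (M := 1) (by simp)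
  simp only [mul_one] at h
  rw [h, Measure.volume_eq_prod, ← Measure.prod_restrict, Measure.restrict_univ,
    integral_prod_mul (fun t : ℝ => t ^ 2) fun p => u p ⬝ᵥ areaVector u p,
    ← intervalIntegral.integral_of_le zero_le_one, integral_pow]
  ring

theorem integral_coneDegree_mul_fderiv (hu : ContDiff ℝ 2 u) (hc : HasCompactSupport u)
    {ψ : (Fin 3 → ℝ) → ℝ} (hψ : ContDiff ℝ 1 ψ) (hψc : HasCompactSupport ψ) (b : Fin 3 → ℝ) :
    ∫ x, coneDegree u x * fderiv ℝ ψ x b = ∫ p, ψ (u p) * (b ⬝ᵥ areaVector u p) := by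
  have hcont : Continuous fun x => fderiv ℝ ψ x b :=
    (hψ.continuous_fderiv one_ne_zero).clm_apply continuous_const
  obtain ⟨M, hM⟩ := hcont.bounded_above_of_compact_support (hψc.fderiv_apply ℝ b)
  rw [integral_coneDegree_mul (hu.of_le one_le_two) hc hcont.measurable hM,
    integral_cone_fderiv hu hc hψ b]

theorem hasCompactSupport_coneDegree (hu : Continuous u) (hc : HasCompactSupport u) :
    HasCompactSupport fun x => (coneDegree u x : ℝ) := by
  obtain ⟨C, hC⟩ := hu.bounded_above_of_compact_support hc
  refine HasCompactSupport.intro (isCompact_closedBall (0 : Fin 3 → ℝ) C) fun x hx => ?_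
  rw [coneDegree, degreeOn_eq_zero_of_notMem_image, Int.cast_zero]
  rintro ⟨z, ⟨hz0, hz1⟩, rfl⟩
  refine hx (mem_closedBall_zero_iff.2 ?_)
  rw [coneMap, norm_smul, Real.norm_of_nonneg hz0.le]
  exact (mul_le_of_le_one_left (norm_nonneg _) hz1).trans (hC _)

end ConeDegree

section Isoperimetric

theorem norm_toLp_sq_eq_dotProduct {ι : Type*} [Fintype ι] (a : ι → ℝ) :
    ‖WithLp.toLp 2 a‖ ^ 2 = a ⬝ᵥ a := by
  rw [EuclideanSpace.real_norm_sq_eq]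
  simp only [dotProduct, sq]

theorem abs_dotProduct_le_norm_toLp_mul {ι : Type*} [Fintype ι] (a b : ι → ℝ) :
    |a ⬝ᵥ b| ≤ ‖WithLp.toLp 2 a‖ * ‖WithLp.toLp 2 b‖ := by
  have h := abs_real_inner_le_norm (WithLp.toLp 2 a) (WithLp.toLp 2 b)
  rwa [EuclideanSpace.inner_toLp_toLp, star_trivial, dotProduct_comm] at h

theorem norm_toLp_cross_le (a b : Fin 3 → ℝ) :
    ‖WithLp.toLp 2 (a ⨯₃ b)‖ ≤ (a ⬝ᵥ a + b ⬝ᵥ b) / 2 := by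
  have ha : 0 ≤ a ⬝ᵥ a := norm_toLp_sq_eq_dotProduct a ▸ sq_nonneg _
  have hb : 0 ≤ b ⬝ᵥ b := norm_toLp_sq_eq_dotProduct b ▸ sq_nonneg _
  refine abs_le_of_sq_le_sq' ?_ (by positivity) |>.2
  rw [norm_toLp_sq_eq_dotProduct, cross_dot_cross, dotProduct_comm b a]
  nlinarith [sq_nonneg (a ⬝ᵥ b), sq_nonneg (a ⬝ᵥ a - b ⬝ᵥ b)]

theorem volume_toLp_preimage_closedBall :
    volume (WithLp.toLp 2 ⁻¹' Metric.closedBall 0 1 : Set (Fin 3 → ℝ))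
      = ENNReal.ofReal (4 * π / 3) := by
  rw [(PiLp.volume_preserving_toLp (Fin 3)).measure_preimage
    Metric.isClosed_closedBall.measurableSet.nullMeasurableSet,
    EuclideanSpace.volume_closedBall_fin_three]
  simp
  ring_nf

variable {u : ℝ × ℝ → Fin 3 → ℝ}

/-- The area of the surface `u`, with multiplicity, as a measure on `ℝ³`. -/
noncomputable def areaMeasure (u : ℝ × ℝ → Fin 3 → ℝ) : Measure (Fin 3 → ℝ) :=
  (volume.withDensity fun p => ENNReal.ofReal ‖WithLp.toLp 2 (areaVector u p)‖).map u

theorem continuous_norm_areaVector (hu : ContDiff ℝ 1 u) :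
    Continuous fun p => ‖WithLp.toLp 2 (areaVector u p)‖ :=
  ((PiLp.continuous_toLp 2 _).comp (continuous_areaVector hu)).norm

theorem integrable_norm_areaVector (hu : ContDiff ℝ 1 u) (hc : HasCompactSupport u) :
    Integrable fun p => ‖WithLp.toLp 2 (areaVector u p)‖ :=
  (continuous_norm_areaVector hu).integrable_of_hasCompactSupport <|
    HasCompactSupport.intro hc fun p hp => by
      rw [areaVector_eq_zero_of_notMem_tsupport hp, WithLp.toLp_zero, norm_zero]

theorem integral_areaMeasure (hu : ContDiff ℝ 1 u) {ψ : (Fin 3 → ℝ) → ℝ} (hψ : Continuous ψ) :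
    ∫ x, ψ x ∂areaMeasure u = ∫ p, ψ (u p) * ‖WithLp.toLp 2 (areaVector u p)‖ := by
  rw [areaMeasure, integral_map hu.continuous.aemeasurable hψ.aestronglyMeasurable,
    integral_withDensity_eq_integral_toReal_smul
      (continuous_norm_areaVector hu).measurable.ennreal_ofReal
      (ae_of_all _ fun _ => ENNReal.ofReal_lt_top)]
  simp only [ENNReal.toReal_ofReal (norm_nonneg _), smul_eq_mul, mul_comm]

theorem areaMeasure_univ (hu : ContDiff ℝ 1 u) (hc : HasCompactSupport u) :
    areaMeasure u Set.univ = ENNReal.ofReal (∫ p, ‖WithLp.toLp 2 (areaVector u p)‖) := by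
  rw [areaMeasure, Measure.map_apply hu.continuous.measurable MeasurableSet.univ,
    Set.preimage_univ, withDensity_apply _ MeasurableSet.univ, setLIntegral_univ,
    ofReal_integral_eq_lintegral_ofReal (integrable_norm_areaVector hu hc)
      (ae_of_all _ fun _ => norm_nonneg _)]

theorem hasVariationLE_coneDegree (hu : ContDiff ℝ 2 u) (hc : HasCompactSupport u) :
    HasVariationLE volume (WithLp.toLp 2 ⁻¹' Metric.closedBall 0 1) (fun x => (coneDegree u x : ℝ))
      (areaMeasure u) := by
  have hu1 : ContDiff ℝ 1 u := hu.of_le one_le_two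
  intro b hb ψ hψ hψc hψ0
  rw [integral_coneDegree_mul_fderiv hu hc hψ hψc, integral_areaMeasure hu1 hψ.continuous]
  rw [← Real.norm_eq_abs]
  refine norm_integral_le_of_norm_le ?_ (ae_of_all _ fun p => ?_)
  · refine ((hψ.continuous.comp hu.continuous).mul
      (continuous_norm_areaVector hu1)).integrable_of_hasCompactSupport
      (HasCompactSupport.intro hc fun p hp => ?_)
    simp [areaVector_eq_zero_of_notMem_tsupport hp]
  · rw [norm_mul, Real.norm_of_nonneg (hψ0 _), Real.norm_eq_abs]
    refine mul_le_mul_of_nonneg_left ?_ (hψ0 _)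
    exact (abs_dotProduct_le_norm_toLp_mul b _).trans
      (mul_le_of_le_one_left (norm_nonneg _) (mem_closedBall_zero_iff.1 hb))

theorem isFiniteMeasure_areaMeasure (hu : ContDiff ℝ 1 u) (hc : HasCompactSupport u) :
    IsFiniteMeasure (areaMeasure u) :=
  ⟨areaMeasure_univ hu hc ▸ ENNReal.ofReal_lt_top⟩

theorem enorm_integral_coneDegree_isoperimetric (hu : ContDiff ℝ 2 u) (hc : HasCompactSupport u) :
    3 * ENNReal.ofReal (4 * π / 3) ^ (1 / 3 : ℝ) *
        ‖∫ x, (coneDegree u x : ℝ)‖ₑ ^ (1 - 1 / 3 : ℝ)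
      ≤ ENNReal.ofReal (∫ p, ‖WithLp.toLp 2 (areaVector u p)‖) := by
  have hu1 : ContDiff ℝ 1 u := hu.of_le one_le_two
  have : IsFiniteMeasure (areaMeasure u) := isFiniteMeasure_areaMeasure hu1 hc
  have hball : Bornology.IsBounded
      (WithLp.toLp 2 ⁻¹' Metric.closedBall 0 1 : Set (Fin 3 → ℝ)) :=
    (PiLp.antilipschitzWith_toLp 2 _).isBounded_preimage Metric.isBounded_closedBall
  have hdeg (x : Fin 3 → ℝ) (hx : (coneDegree u x : ℝ) ≠ 0) : 1 ≤ ‖(coneDegree u x : ℝ)‖ₑ := by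
    rw [Real.enorm_eq_ofReal_abs, ENNReal.one_le_ofReal, ← Int.cast_abs]
    exact_mod_cast Int.one_le_abs (Int.cast_ne_zero.1 hx)
  have h := (hasVariationLE_coneDegree hu hc).isoperimetric (by simp)
    (integrable_degreeOn volume (contDiff_coneMap hu1) measurableSet_height_mem_Ioc
      (integrableOn_det_fderiv_coneMap hu1 hc))
    (measurable_degreeOn (contDiff_coneMap hu1) measurableSet_height_mem_Ioc)
    (hasCompactSupport_coneDegree hu.continuous hc) hdeg
    (WithLp.measurable_toLp 2 _ Metric.isClosed_closedBall.measurableSet) hball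
  simp only [areaMeasure_univ hu1 hc, volume_toLp_preimage_closedBall, Module.finrank_fin_fun,
    Nat.cast_ofNat] at h
  refine le_trans ?_ h
  gcongr
  exact enorm_integral_le_lintegral_enorm _

theorem isoperimetric_areaVector (hu : ContDiff ℝ 2 u) (hc : HasCompactSupport u) :
    4 * π * (∫ p, u p ⬝ᵥ areaVector u p) ^ 2 ≤ (∫ p, ‖WithLp.toLp 2 (areaVector u p)‖) ^ 3 := by
  set A := ∫ p, ‖WithLp.toLp 2 (areaVector u p)‖
  set V := ∫ p, u p ⬝ᵥ areaVector u p with hV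
  have hA : 0 ≤ A := integral_nonneg fun _ => norm_nonneg _
  have h := ENNReal.toReal_mono ENNReal.ofReal_ne_top
    (enorm_integral_coneDegree_isoperimetric hu hc)
  rw [integral_coneDegree (hu.of_le one_le_two) hc, ← hV, ENNReal.toReal_ofReal hA,
    ENNReal.toReal_mul, ENNReal.toReal_mul, ENNReal.toReal_ofNat, ← ENNReal.toReal_rpow,
    ← ENNReal.toReal_rpow, toReal_enorm, ENNReal.toReal_ofReal (by positivity),
    Real.norm_eq_abs] at h
  have hcube : (3 * (4 * π / 3) ^ (1 / 3 : ℝ) * |V / 3| ^ (1 - 1 / 3 : ℝ)) ^ 3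
      = 4 * π * V ^ 2 := by
    rw [mul_pow, mul_pow, ← Real.rpow_mul_natCast (by positivity),
      ← Real.rpow_mul_natCast (abs_nonneg _)]
    norm_num [div_pow]
    ring
  exact hcube ▸ pow_le_pow_left₀ (by positivity) h 3

theorem integral_isoperimetric (hu : ContDiff ℝ 2 u) (hc : HasCompactSupport u) :
    32 * π * (∫ p, u p ⬝ᵥ areaVector u p) ^ 2
      ≤ (∫ p, (pderivX u p ⬝ᵥ pderivX u p + pderivY u p ⬝ᵥ pderivY u p)) ^ 3 := by
  have hX : Continuous (pderivX u) := (contDiff_pderivX hu).continuous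
  have hY : Continuous (pderivY u) := (contDiff_pderivY hu).continuous
  have hint : Integrable fun p => pderivX u p ⬝ᵥ pderivX u p + pderivY u p ⬝ᵥ pderivY u p :=
    ((hX.dotProduct hX).add (hY.dotProduct hY)).integrable_of_hasCompactSupport <|
      HasCompactSupport.intro hc fun p hp => by
        simp [pderivX_eq_zero_of_notMem_tsupport hp, pderivY_eq_zero_of_notMem_tsupport hp]
  have harea : ∫ p, ‖WithLp.toLp 2 (areaVector u p)‖
      ≤ (∫ p, (pderivX u p ⬝ᵥ pderivX u p + pderivY u p ⬝ᵥ pderivY u p)) / 2 := by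
    rw [← integral_div]
    exact integral_mono (integrable_norm_areaVector (hu.of_le one_le_two) hc) (hint.div_const 2)
      fun p => norm_toLp_cross_le _ _
  have hcube := pow_le_pow_left₀ (integral_nonneg fun _ => norm_nonneg _) harea 3
  rw [div_pow] at hcube
  linarith [isoperimetric_areaVector hu hc]

end Isoperimetric

theorem dirEnergy_eq_integral {Ω : Set (ℝ × ℝ)} {u : ℝ × ℝ → Fin 3 → ℝ} (hsub : tsupport u ⊆ Ω) :
    dirEnergy Ω u = ∫ p, (pderivX u p ⬝ᵥ pderivX u p + pderivY u p ⬝ᵥ pderivY u p) :=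
  setIntegral_eq_integral_of_forall_compl_eq_zero fun p hp => by
    have hp' : p ∉ tsupport u := fun h => hp (hsub h)
    simp [dot3, pderivX_eq_zero_of_notMem_tsupport hp', pderivY_eq_zero_of_notMem_tsupport hp']

theorem vol_eq_integral {Ω : Set (ℝ × ℝ)} {u : ℝ × ℝ → Fin 3 → ℝ} (hsub : tsupport u ⊆ Ω) :
    vol Ω u = ∫ p, u p ⬝ᵥ areaVector u p :=
  setIntegral_eq_integral_of_forall_compl_eq_zero fun p hp => by
    simp [dot3, image_eq_zero_of_notMem_tsupport fun h => hp (hsub h)]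

theorem vol_sq_le_dirEnergy_cube {Ω : Set (ℝ × ℝ)} {u : ℝ × ℝ → Fin 3 → ℝ} (hu : ContDiff ℝ 2 u)
    (hc : HasCompactSupport u) (hsub : tsupport u ⊆ Ω) :
    32 * π * vol Ω u ^ 2 ≤ dirEnergy Ω u ^ 3 := by
  rw [vol_eq_integral hsub, dirEnergy_eq_integral hsub]
  exact integral_isoperimetric hu hc

theorem depth_explicit_lower_bound_general (Ω : Set (ℝ × ℝ)) (H : ℝ) (u : ℝ × ℝ → Fin 3 → ℝ)
    (hu : ContDiff ℝ 2 u) (hc : HasCompactSupport u) (hsub : tsupport u ⊆ Ω)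
    (hD : Dfun Ω H 1 u = 0) (hne : dnorm Ω u ≠ 0) :
    4 * π / (3 * H ^ 2) ≤ Efun Ω H u := by
  have isoperimetric := vol_sq_le_dirEnergy_cube hu hc hsub
  have energy_pos : 0 < dirEnergy Ω u := Real.sqrt_ne_zero'.1 hne
  unfold Dfun at hD
  unfold Efun
  generalize dirEnergy Ω u = A at *
  generalize vol Ω u = V at *
  have hAV : A = -(2 * H * V) := by linarith
  have hH : H ≠ 0 := by
    rintro rfl
    linarith
  have energy_eq : 1 / 2 * A + 2 * H / 3 * V = A / 6 := by linarith
  have lower_bound : 8 * π ≤ H ^ 2 * A := by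
    refine le_of_mul_le_mul_right ?_ (pow_pos energy_pos 2)
    calc 8 * π * A ^ 2 = H ^ 2 * (32 * π * V ^ 2) := by rw [hAV]; ring
      _ ≤ H ^ 2 * A ^ 3 := by gcongr
      _ = H ^ 2 * A * A ^ 2 := by ring
  rw [energy_eq, div_le_iff₀ (by positivity)]
  linarith

/-- Every admissible `u` with `D(u) = 0` and `‖u‖ ≠ 0` satisfies
`E(u) ≥ 4π/(3H²)`: explicit lower bound for the potential-well depth `d`. -/
theorem depth_explicit_lower_bound (Ω : Set (ℝ × ℝ)) (hΩ : IsOpen Ω)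
    (hΩb : Bornology.IsBounded Ω) (H : ℝ) (hH : 0 < H)
    (u : ℝ × ℝ → Fin 3 → ℝ) (hu : IsAdmissible Ω u)
    (hD : Dfun Ω H 1 u = 0) (hne : dnorm Ω u ≠ 0) :
    4 * Real.pi / (3 * H ^ 2) ≤ Efun Ω H u :=
  depth_explicit_lower_bound_general Ω H u (contDiff_infty.1 hu.1 2) hu.2.1 hu.2.2 hD hne
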